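/- arXiv:1006.4762 — 4 statements merged into one kernel-verified Lean document; each statement's English description precedes it below -/
import Mathlib

section
/- Let K be a field, n ≥ 1, and G ⊆ GL_n(K) a finite subgroup that is *-stable, i.e., stable under the automorphism σ ↦ σ* := J·(σ^{-1})^T·J of GL_n(K), where J is the antidiagonal permutation matrix. Assume the invariant ring K[x_1,…,x_n]^G is generated as a K-algebra by elements f_1,…,f_m. Then the invariant field K(V ⊕ V*)^G is generated as a field extension of K by f_1,…,f_m, f_1*,…,f_m*, and u_0, where * denotes the K-algebra involution of K[x_1,…,x_n,y_1,…,y_n] with x_i ↦ y_{n+1−i} and y_i ↦ x_{n+1−i}, and u_0 := Σ_{j=1}^n x_j y_j. -/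
open MvPolynomial Matrix

variable (K : Type) [Field K] (n : ℕ)

noncomputable def gact (σ : GL (Fin n) K) :
    MvPolynomial (Fin n ⊕ Fin n) K →ₐ[K] MvPolynomial (Fin n ⊕ Fin n) K :=
  aeval (Sum.elim
    (fun j => ∑ i : Fin n, C ((σ : Matrix (Fin n) (Fin n) K) i j) * X (Sum.inl i))
    (fun j => ∑ i : Fin n,
      C (((σ⁻¹ : GL (Fin n) K) : Matrix (Fin n) (Fin n) K) j i) * X (Sum.inr i)))

lemma gact_comp (σ τ : GL (Fin n) K) :
    (gact K n σ).comp (gact K n τ) = gact K n (σ * τ) := by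
  apply algHom_ext
  rintro (j | j)
  · simp only [gact, AlgHom.comp_apply, aeval_X, Sum.elim_inl, map_sum, _root_.map_mul,
      aeval_C, algebraMap_eq]
    rw [Units.val_mul]
    simp only [Matrix.mul_apply, map_sum, _root_.map_mul, Finset.sum_mul, Finset.mul_sum]
    rw [Finset.sum_comm]
    refine Finset.sum_congr rfl fun i _ => Finset.sum_congr rfl fun i' _ => ?_
    ring
  · simp only [gact, AlgHom.comp_apply, aeval_X, Sum.elim_inr, map_sum, _root_.map_mul,
      aeval_C, algebraMap_eq]
    rw [_root_.mul_inv_rev, Units.val_mul]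
    simp only [Matrix.mul_apply, map_sum, _root_.map_mul, Finset.sum_mul, Finset.mul_sum]
    rw [Finset.sum_comm]
    refine Finset.sum_congr rfl fun i _ => Finset.sum_congr rfl fun i' _ => ?_
    ring

lemma gact_one : gact K n 1 = AlgHom.id K _ := by
  apply algHom_ext
  rintro (j | j) <;>
    simp [gact, Matrix.one_apply, apply_ite (C : K → MvPolynomial (Fin n ⊕ Fin n) K),
      Finset.sum_ite_eq]

noncomputable def gactEquiv (σ : GL (Fin n) K) :
    MvPolynomial (Fin n ⊕ Fin n) K ≃ₐ[K] MvPolynomial (Fin n ⊕ Fin n) K :=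
  AlgEquiv.ofAlgHom (gact K n σ) (gact K n σ⁻¹)
    (by rw [gact_comp, mul_inv_cancel, gact_one])
    (by rw [gact_comp, inv_mul_cancel, gact_one])

noncomputable def gactFrac (σ : GL (Fin n) K) :
    FractionRing (MvPolynomial (Fin n ⊕ Fin n) K) ≃ₐ[K]
      FractionRing (MvPolynomial (Fin n ⊕ Fin n) K) :=
  IsFractionRing.algEquivOfAlgEquiv (gactEquiv K n σ)

/-- The antidiagonal permutation matrix `J`. -/
def antidiagJ : Matrix (Fin n) (Fin n) K :=
  Matrix.of fun i j => if j = i.rev then 1 else 0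

/-- The involution `*` of `K[V ⊕ V*]`: `x_i ↦ y_{n+1-i}`, `y_i ↦ x_{n+1-i}`. -/
noncomputable def starInvol :
    MvPolynomial (Fin n ⊕ Fin n) K →ₐ[K] MvPolynomial (Fin n ⊕ Fin n) K :=
  rename (Sum.elim (fun i : Fin n => Sum.inr i.rev) (fun i : Fin n => Sum.inl i.rev))


section Abstract

variable {G R F L : Type} [Group G] [Finite G] [CommRing R] [Field F] [Field L]
  [Algebra F L]

lemma aux_coeff_lift (ρ : G → R →+* R) (ι : R →+* L) (A : Subring R)
    (hInv : ∀ p ∈ A, (∀ σ, ρ σ p = p) → ι p ∈ (algebraMap F L).range)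
    (hι : Function.Injective ι)
    (hmul : ∀ σ τ r, ρ (σ * τ) r = ρ σ (ρ τ r)) (hone : ∀ r, ρ 1 r = r)
    (hA : ∀ σ, ∀ a ∈ A, ρ σ a ∈ A) (a : R) (ha : a ∈ A) :
    IsIntegral F (ι a) ∧ IsSeparable F (ι a) ∧
      ((minpoly F (ι a)).map (algebraMap F L)).Splits := by
  classical
  have := Fintype.ofFinite G
  let S : Finset R := Finset.univ.image (fun σ : G => ρ σ a)
  have hSA : ∀ b ∈ S, b ∈ A := by
    intro b hb
    obtain ⟨σ, -, rfl⟩ := Finset.mem_image.1 hb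
    exact hA σ a ha
  have hinj : ∀ τ, Function.Injective (ρ τ) := by
    intro τ x y hxy
    have := congrArg (ρ τ⁻¹) hxy
    rwa [← hmul, ← hmul, inv_mul_cancel, hone, hone] at this
  have hSimg : ∀ τ, S.image (ρ τ) = S := by
    intro τ
    apply Finset.eq_of_subset_of_card_le
    · intro b hb
      obtain ⟨c, hc, rfl⟩ := Finset.mem_image.1 hb
      obtain ⟨σ, -, rfl⟩ := Finset.mem_image.1 hc
      exact Finset.mem_image.2 ⟨τ * σ, Finset.mem_univ _, hmul _ _ _⟩
    · rw [Finset.card_image_of_injective _ (hinj τ)]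
  let Q : Polynomial R := ∏ b ∈ S, (Polynomial.X - Polynomial.C b)
  have hQinv : ∀ τ, Q.map (ρ τ) = Q := by
    intro τ
    conv_rhs => rw [show Q = ∏ b ∈ S.image (ρ τ), (Polynomial.X - Polynomial.C b) by
      rw [hSimg]]
    rw [Finset.prod_image (fun x _ y _ h => hinj τ h)]
    simp [Q, Polynomial.map_prod]
  have hQA : ∀ k, Q.coeff k ∈ A := by
    have : Q ∈ Polynomial.lifts A.subtype := by
      apply Subsemiring.prod_mem
      intro b hb
      rw [Polynomial.mem_lifts]
      exact ⟨Polynomial.X - Polynomial.C ⟨b, hSA b hb⟩, by simp⟩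
    intro k
    obtain ⟨c, hc⟩ := (Polynomial.lifts_iff_coeff_lifts _).1 this k
    rw [← hc]; exact c.2
  have hL : Q.map ι ∈ Polynomial.lifts (algebraMap F L) := by
    rw [Polynomial.lifts_iff_coeff_lifts]
    intro k
    rw [Polynomial.coeff_map]
    apply hInv _ (hQA k)
    intro σ
    conv_rhs => rw [← hQinv σ]
    rw [Polynomial.coeff_map]
  obtain ⟨P, hP⟩ := (Polynomial.mem_lifts _).1 hL
  have hQL : Q.map ι = ∏ b ∈ S, (Polynomial.X - Polynomial.C (ι b)) := by
    simp [Q, Polynomial.map_prod]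
  have hmon : (Q.map ι).Monic := by
    rw [hQL]; exact Polynomial.monic_prod_of_monic _ _ fun b _ => Polynomial.monic_X_sub_C _
  have hPmon : P.Monic := by
    rw [← hP] at hmon
    exact Polynomial.monic_of_injective (algebraMap F L).injective hmon
  have haS : a ∈ S := Finset.mem_image.2 ⟨1, Finset.mem_univ _, hone a⟩
  have hroot : Polynomial.aeval (ι a) P = 0 := by
    rw [Polynomial.aeval_def, ← Polynomial.eval_map, hP, hQL, Polynomial.eval_prod]
    exact Finset.prod_eq_zero haS (by simp)
  have hdvd : minpoly F (ι a) ∣ P := minpoly.dvd _ _ hroot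
  have hsep : P.Separable := by
    rw [← Polynomial.separable_map (algebraMap F L), hP, hQL,
      Polynomial.separable_prod_X_sub_C_iff']
    exact fun x _ y _ h => hι h
  refine ⟨⟨P, hPmon, by rwa [Polynomial.aeval_def] at hroot⟩, hsep.of_dvd hdvd, ?_⟩
  have hspl : (P.map (algebraMap F L)).Splits := by
    rw [hP, hQL]
    exact Polynomial.Splits.prod fun b _ => Polynomial.Splits.X_sub_C _
  exact hspl.of_dvd (by rw [hP]; exact hmon.ne_zero) (Polynomial.map_dvd _ hdvd)

lemma aux_exists_group (ρ : G → R →+* R) (ι : R →+* L) (A : Subring R)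
    (φ : L →+* L)
    (hInv : ∀ p ∈ A, (∀ σ, ρ σ p = p) → φ (ι p) = ι p)
    (hmul : ∀ σ τ r, ρ (σ * τ) r = ρ σ (ρ τ r)) (hone : ∀ r, ρ 1 r = r)
    (hA : ∀ σ, ∀ a ∈ A, ρ σ a ∈ A) {n : ℕ} (v : Fin n → R) (hv : ∀ j, v j ∈ A) :
    ∃ σ, ∀ j, φ (ι (v j)) = ι (ρ σ (v j)) := by
  classical
  have := Fintype.ofFinite G
  let T : G → MvPolynomial (Option (Fin n)) R := fun σ =>
    X none - ∑ j, C (ρ σ (v j)) * X (some j)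
  let P : MvPolynomial (Option (Fin n)) R := ∏ σ, T σ
  have hPinv : ∀ τ, MvPolynomial.map (ρ τ) P = P := by
    intro τ
    simp only [P, map_prod]
    refine Fintype.prod_equiv (Equiv.mulLeft τ) _ _ fun σ => ?_
    simp [T, hmul]
  have hPA : ∀ k, P.coeff k ∈ A := by
    have : P ∈ (MvPolynomial.map (σ := Option (Fin n)) A.subtype).range := by
      apply Subring.prod_mem
      intro σ _
      exact ⟨X none - ∑ j, C ⟨ρ σ (v j), hA σ _ (hv j)⟩ * X (some j), by simp [T]⟩
    obtain ⟨P', hP'⟩ := this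
    intro k
    rw [← hP', coeff_map]
    exact (coeff k P').2
  have hmap : MvPolynomial.map (φ.comp ι) P = MvPolynomial.map ι P := by
    ext k
    rw [coeff_map, coeff_map]
    apply hInv _ (hPA k)
    intro σ
    conv_rhs => rw [← hPinv σ]
    rw [coeff_map]
  let g : Option (Fin n) → MvPolynomial (Fin n) L := fun o =>
    o.elim (∑ j, C (φ (ι (v j))) * X j) X
  have h2 := congrArg (aeval (R := L) g) hmap
  have h0 : aeval (R := L) g (MvPolynomial.map (φ.comp ι) P) = 0 := by
    simp only [P, map_prod]
    apply Finset.prod_eq_zero (Finset.mem_univ 1)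
    simp [T, g, hone]
  rw [h0] at h2
  simp only [P, map_prod] at h2
  obtain ⟨σ, -, hσ⟩ := Finset.prod_eq_zero_iff.1 h2.symm
  refine ⟨σ, fun j => ?_⟩
  simp only [T, g, map_sub, map_sum, map_X, _root_.map_mul, map_C, aeval_X, aeval_C,
    Option.elim, algebraMap_eq] at hσ
  have h3 := congrArg (coeff (Finsupp.single j 1)) (sub_eq_zero.1 hσ)
  simpa [coeff_sum, coeff_C_mul, coeff_X, Finsupp.single_left_inj] using h3

end Abstract

lemma antidiagJ_mul_mul_apply (M : Matrix (Fin n) (Fin n) K) (i j : Fin n) :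
    (antidiagJ K n * M * antidiagJ K n) i j = M i.rev j.rev := by
  have h : ∀ x : Fin n, (j = x.rev) = (x = j.rev) := fun x => by
    rw [eq_iff_iff]
    constructor <;> (rintro rfl; simp)
  simp [antidiagJ, Matrix.mul_apply, h]

lemma antidiagJ_mul_self : antidiagJ K n * antidiagJ K n = 1 := by
  ext i j
  have := antidiagJ_mul_mul_apply K n 1 i j
  rw [Matrix.mul_one] at this
  rw [this]
  simp [Matrix.one_apply]

lemma inv_of_star (σ τ : GL (Fin n) K) (h : (τ : Matrix (Fin n) (Fin n) K) =
      antidiagJ K n * ((σ⁻¹ : GL (Fin n) K) : Matrix (Fin n) (Fin n) K)ᵀ * antidiagJ K n) :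
    ((τ⁻¹ : GL (Fin n) K) : Matrix (Fin n) (Fin n) K) =
      antidiagJ K n * (σ : Matrix (Fin n) (Fin n) K)ᵀ * antidiagJ K n := by
  have h1 : (τ : Matrix (Fin n) (Fin n) K) *
      (antidiagJ K n * (σ : Matrix (Fin n) (Fin n) K)ᵀ * antidiagJ K n) = 1 := by
    rw [h]
    have h2 : ((σ⁻¹ : GL (Fin n) K) : Matrix (Fin n) (Fin n) K)ᵀ *
        (σ : Matrix (Fin n) (Fin n) K)ᵀ = 1 := by
      rw [← Matrix.transpose_mul, ← Units.val_mul, mul_inv_cancel, Units.val_one,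
        Matrix.transpose_one]
    calc _ = antidiagJ K n * (((σ⁻¹ : GL (Fin n) K) : Matrix (Fin n) (Fin n) K)ᵀ *
          (antidiagJ K n * antidiagJ K n) * (σ : Matrix (Fin n) (Fin n) K)ᵀ) * antidiagJ K n := by
            simp only [Matrix.mul_assoc]
      _ = 1 := by rw [antidiagJ_mul_self, Matrix.mul_one, h2, Matrix.mul_one, antidiagJ_mul_self]
  calc _ = ((τ⁻¹ : GL (Fin n) K) : Matrix (Fin n) (Fin n) K) * ((τ : Matrix (Fin n) (Fin n) K) *
      (antidiagJ K n * (σ : Matrix (Fin n) (Fin n) K)ᵀ * antidiagJ K n)) := by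
        rw [h1, Matrix.mul_one]
    _ = _ := by
      rw [← Matrix.mul_assoc, ← Units.val_mul, inv_mul_cancel, Units.val_one, Matrix.one_mul]

lemma gact_starInvol (σ τ : GL (Fin n) K) (h : (τ : Matrix (Fin n) (Fin n) K) =
      antidiagJ K n * ((σ⁻¹ : GL (Fin n) K) : Matrix (Fin n) (Fin n) K)ᵀ * antidiagJ K n)
    (p : MvPolynomial (Fin n ⊕ Fin n) K) :
    gact K n σ (starInvol K n p) = starInvol K n (gact K n τ p) := by
  have h' := inv_of_star K n σ τ h
  have key : (gact K n σ).comp (starInvol K n) = (starInvol K n).comp (gact K n τ) := by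
    apply algHom_ext
    rintro (j | j)
    · simp only [gact, starInvol, AlgHom.comp_apply, rename_X, aeval_X, Sum.elim_inl,
        Sum.elim_inr, map_sum, _root_.map_mul, rename_C, h, antidiagJ_mul_mul_apply,
        Matrix.transpose_apply]
      exact (Fintype.sum_equiv Fin.revPerm _ _ fun i => by simp)
    · simp only [gact, starInvol, AlgHom.comp_apply, rename_X, aeval_X, Sum.elim_inl,
        Sum.elim_inr, map_sum, _root_.map_mul, rename_C, h', antidiagJ_mul_mul_apply,
        Matrix.transpose_apply]
      exact (Fintype.sum_equiv Fin.revPerm _ _ fun i => by simp)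
  exact DFunLike.congr_fun key p

lemma starInvol_starInvol (p : MvPolynomial (Fin n ⊕ Fin n) K) :
    starInvol K n (starInvol K n p) = p := by
  have key : (starInvol K n).comp (starInvol K n) = AlgHom.id K _ := by
    apply algHom_ext
    rintro (j | j) <;> simp [starInvol]
  exact DFunLike.congr_fun key p

lemma starInvol_rename_inr (p : MvPolynomial (Fin n) K) :
    ∃ q, starInvol K n (rename Sum.inr p) = rename Sum.inl q :=
  ⟨rename Fin.rev p, by simp only [starInvol, rename_rename]; rfl⟩

/-- `u_0` transformed by `σ` on the `x` and `τ` on the `y`. -/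
lemma pairing_expand (σ τ : GL (Fin n) K) :
    ∑ j : Fin n, gact K n σ (X (Sum.inl j)) * gact K n τ (X (Sum.inr j)) =
      ∑ i, ∑ k, C (((σ * τ⁻¹ : GL (Fin n) K) : Matrix (Fin n) (Fin n) K) i k) *
        (X (Sum.inl i) * X (Sum.inr k)) := by
  simp only [gact, aeval_X, Sum.elim_inl, Sum.elim_inr, Units.val_mul, Matrix.mul_apply,
    map_sum, _root_.map_mul, Finset.sum_mul, Finset.mul_sum]
  rw [Finset.sum_comm]
  conv_rhs => rw [Finset.sum_comm]
  refine Finset.sum_congr rfl fun i _ => ?_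
  rw [Finset.sum_comm]
  refine Finset.sum_congr rfl fun k _ => ?_
  refine Finset.sum_congr rfl fun j _ => ?_
  ring

lemma gact_pairing (σ : GL (Fin n) K) :
    gact K n σ (∑ j : Fin n, X (Sum.inl j) * X (Sum.inr j)) =
      ∑ j : Fin n, X (Sum.inl j) * X (Sum.inr j) := by
  simp only [map_sum, _root_.map_mul]
  rw [pairing_expand, mul_inv_cancel]
  refine Finset.sum_congr rfl fun i _ => ?_
  simp [Matrix.one_apply, apply_ite (C : K → MvPolynomial (Fin n ⊕ Fin n) K)]

lemma eq_of_pairing (σ τ : GL (Fin n) K)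
    (h : ∑ j : Fin n, gact K n σ (X (Sum.inl j)) * gact K n τ (X (Sum.inr j)) =
      ∑ j : Fin n, X (Sum.inl j) * X (Sum.inr j)) : σ = τ := by
  rw [pairing_expand] at h
  rw [← mul_inv_eq_one]
  ext i k
  classical
  have h2 := congrArg (MvPolynomial.eval (Sum.elim (Pi.single i (1 : K)) (Pi.single k (1 : K)))) h
  simpa [Pi.single_apply, Matrix.one_apply, eq_comm] using h2

lemma gactFrac_algebraMap (σ : GL (Fin n) K) (p : MvPolynomial (Fin n ⊕ Fin n) K) :
    gactFrac K n σ (algebraMap _ _ p) = algebraMap _ _ (gact K n σ p) := by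
  simp [gactFrac, gactEquiv]

/-- Corollary 1.3: let `G ⊆ GL_n(K)` be a finite subgroup which is `*`-stable
(i.e. stable under `σ ↦ σ* = J (σ⁻¹)ᵀ J`), and suppose `K[x_1,…,x_n]^G` is generated
as a `K`-algebra by `f_1,…,f_m`.  Then the invariant field `K(V ⊕ V*)^G` is generated,
as a field extension of `K`, by the `f_i`, the `f_i^*`, and `u_0`. -/
theorem invariantField_eq_adjoin_of_starStable (hn : 0 < n)
    (G : Subgroup (GL (Fin n) K)) (hG : Finite G)
    (hstar : ∀ σ ∈ G, ∃ τ ∈ G, (τ : Matrix (Fin n) (Fin n) K) =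
      antidiagJ K n * ((σ⁻¹ : GL (Fin n) K) : Matrix (Fin n) (Fin n) K)ᵀ * antidiagJ K n)
    (m : ℕ) (f : Fin m → MvPolynomial (Fin n ⊕ Fin n) K)
    -- each `f i` lies in `K[x_1,…,x_n]` and is `G`-invariant …
    (hf₁ : ∀ i, (∃ p₀ : MvPolynomial (Fin n) K, f i = rename Sum.inl p₀) ∧
      ∀ σ ∈ G, gact K n σ (f i) = f i)
    -- … and every `G`-invariant element of `K[x_1,…,x_n]` is a polynomial in the `f i`:
    (hf₂ : ∀ p : MvPolynomial (Fin n ⊕ Fin n) K,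
      (∃ p₀ : MvPolynomial (Fin n) K, p = rename Sum.inl p₀) →
      (∀ σ ∈ G, gact K n σ p = p) → p ∈ Algebra.adjoin K (Set.range f))
    (z : FractionRing (MvPolynomial (Fin n ⊕ Fin n) K)) :
    (∀ σ ∈ G, gactFrac K n σ z = z) ↔
      z ∈ IntermediateField.adjoin K
        (algebraMap (MvPolynomial (Fin n ⊕ Fin n) K)
            (FractionRing (MvPolynomial (Fin n ⊕ Fin n) K)) ''
          (Set.range f ∪ Set.range (fun i => starInvol K n (f i)) ∪
            {∑ j : Fin n, X (Sum.inl j) * X (Sum.inr j)})) := by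
  classical
  let L := FractionRing (MvPolynomial (Fin n ⊕ Fin n) K)
  let ι : MvPolynomial (Fin n ⊕ Fin n) K →+* L :=
    algebraMap (MvPolynomial (Fin n ⊕ Fin n) K) (FractionRing (MvPolynomial (Fin n ⊕ Fin n) K))
  let S : Set L := ι '' (Set.range f ∪ Set.range (fun i => starInvol K n (f i)) ∪
            {∑ j : Fin n, X (Sum.inl j) * X (Sum.inr j)})
  have hιinj : Function.Injective ι := IsFractionRing.injective _ _
  constructor
  · intro hz
    let F := IntermediateField.adjoin K S
    let ρ : G → MvPolynomial (Fin n ⊕ Fin n) K →+* MvPolynomial (Fin n ⊕ Fin n) K :=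
      fun σ => (gact K n σ : MvPolynomial (Fin n ⊕ Fin n) K →+* MvPolynomial (Fin n ⊕ Fin n) K)
    have hmul : ∀ σ τ r, ρ (σ * τ) r = ρ σ (ρ τ r) := fun σ τ r =>
      (DFunLike.congr_fun (gact_comp K n σ τ) r).symm
    have hone : ∀ r, ρ 1 r = r := fun r => DFunLike.congr_fun (gact_one K n) r
    let Ax : Subring (MvPolynomial (Fin n ⊕ Fin n) K) :=
      (rename (R := K) (Sum.inl : Fin n → Fin n ⊕ Fin n)).range.toSubring
    let Ay : Subring (MvPolynomial (Fin n ⊕ Fin n) K) :=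
      (rename (R := K) (Sum.inr : Fin n → Fin n ⊕ Fin n)).range.toSubring
    have hAx : ∀ σ, ∀ a ∈ Ax, ρ σ a ∈ Ax := by
      rintro σ _ ⟨a, rfl⟩
      refine ⟨aeval (fun j => ∑ i : Fin n,
        C (((σ : GL (Fin n) K) : Matrix (Fin n) (Fin n) K) i j) * X i) a, ?_⟩
      change rename Sum.inl _ = gact K n σ (rename Sum.inl a)
      rw [← AlgHom.comp_apply, ← AlgHom.comp_apply]
      refine DFunLike.congr_fun (algHom_ext fun j => ?_) a
      simp [gact]
    have hAy : ∀ σ, ∀ a ∈ Ay, ρ σ a ∈ Ay := by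
      rintro σ _ ⟨a, rfl⟩
      refine ⟨aeval (fun j => ∑ i : Fin n,
        C (((σ⁻¹ : GL (Fin n) K) : Matrix (Fin n) (Fin n) K) j i) * X i) a, ?_⟩
      change rename Sum.inr _ = gact K n σ (rename Sum.inr a)
      rw [← AlgHom.comp_apply, ← AlgHom.comp_apply]
      refine DFunLike.congr_fun (algHom_ext fun j => ?_) a
      simp [gact]
    -- invariants lie in F
    let B : Subalgebra K (MvPolynomial (Fin n ⊕ Fin n) K) :=
      F.toSubalgebra.comap (Algebra.algHom K (MvPolynomial (Fin n ⊕ Fin n) K) L)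
    have hfB : Algebra.adjoin K (Set.range f) ≤ B := by
      rw [Algebra.adjoin_le_iff]
      intro p hp
      exact IntermediateField.subset_adjoin K S ⟨p, Or.inl (Or.inl hp), rfl⟩
    have hfsB : Algebra.adjoin K (Set.range f) ≤ B.comap (starInvol K n) := by
      rw [Algebra.adjoin_le_iff]
      rintro _ ⟨i, rfl⟩
      exact IntermediateField.subset_adjoin K S ⟨_, Or.inl (Or.inr ⟨i, rfl⟩), rfl⟩
    have hu : ι (∑ j : Fin n, X (Sum.inl j) * X (Sum.inr j)) ∈ F :=
      IntermediateField.subset_adjoin K S ⟨_, Or.inr rfl, rfl⟩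
    have hInvx : ∀ p ∈ Ax, (∀ σ, ρ σ p = p) → ι p ∈ (algebraMap F L).range := by
      rintro _ ⟨p, rfl⟩ hp
      have : ι (rename Sum.inl p) ∈ F := hfB (hf₂ _ ⟨p, rfl⟩ fun σ hσ => hp ⟨σ, hσ⟩)
      exact ⟨⟨_, this⟩, rfl⟩
    have hInvy : ∀ p ∈ Ay, (∀ σ, ρ σ p = p) → ι p ∈ (algebraMap F L).range := by
      rintro _ ⟨p, rfl⟩ hp
      have h1 : starInvol K n (rename Sum.inr p) ∈ Algebra.adjoin K (Set.range f) := by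
        apply hf₂ _ (starInvol_rename_inr K n p)
        intro σ hσ
        obtain ⟨τ, hτ, h⟩ := hstar σ hσ
        rw [gact_starInvol K n σ τ h]
        exact congrArg _ (hp ⟨τ, hτ⟩)
      have h2 := hfsB h1
      rw [Subalgebra.mem_comap, starInvol_starInvol] at h2
      have : ι (rename Sum.inr p) ∈ F := h2
      exact ⟨⟨_, this⟩, rfl⟩
    have hXx : ∀ j, (X (Sum.inl j) : MvPolynomial (Fin n ⊕ Fin n) K) ∈ Ax :=
      fun j => ⟨X j, rename_X _ _⟩
    have hXy : ∀ j, (X (Sum.inr j) : MvPolynomial (Fin n ⊕ Fin n) K) ∈ Ay :=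
      fun j => ⟨X j, rename_X _ _⟩
    let V : Set L := Set.range fun s => ι (X s)
    have hV : ∀ v ∈ V, IsIntegral F v ∧ IsSeparable F v ∧
        ((minpoly F v).map (algebraMap F L)).Splits := by
      rintro _ ⟨j | j, rfl⟩
      · exact aux_coeff_lift ρ ι Ax hInvx hιinj hmul hone hAx _ (hXx j)
      · exact aux_coeff_lift ρ ι Ay hInvy hιinj hmul hone hAy _ (hXy j)
    have hVtop : IntermediateField.adjoin F V = ⊤ := by
      rw [eq_top_iff]
      intro w _
      have hp : ∀ p, ι p ∈ IntermediateField.adjoin F V := by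
        intro p
        induction p using MvPolynomial.induction_on with
        | C a =>
          have : ι (C a) = algebraMap F L (algebraMap K F a) := by
            rw [← IsScalarTower.algebraMap_apply K F L,
              IsScalarTower.algebraMap_apply K (MvPolynomial (Fin n ⊕ Fin n) K) L]
            rfl
          rw [this]
          exact IntermediateField.algebraMap_mem _ _
        | add p q hp hq => rw [map_add]; exact add_mem hp hq
        | mul_X p s hp =>
          rw [_root_.map_mul]
          exact mul_mem hp (IntermediateField.subset_adjoin _ _ ⟨s, rfl⟩)
      obtain ⟨p, q, hq, rfl⟩ := IsFractionRing.div_surjective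
        (A := MvPolynomial (Fin n ⊕ Fin n) K) w
      exact div_mem (hp p) (hp q)
    have hsep : Algebra.IsSeparable F L := by
      rw [← separableClosure.eq_top_iff, eq_top_iff, ← hVtop,
        IntermediateField.adjoin_le_iff]
      intro v hv
      exact mem_separableClosure_iff.2 (hV v hv).2.1
    have hnorm : Normal F L := by
      rw [normal_iff]
      intro w
      refine ⟨Algebra.IsIntegral.isIntegral w, ?_⟩
      have hw : w ∈ IntermediateField.adjoin F V := by
        rw [hVtop]; exact IntermediateField.mem_top
      exact IntermediateField.splits_of_mem_adjoin F L (S := V)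
        (fun v hv => ⟨(hV v hv).1, (hV v hv).2.2⟩) hw
    have hgal : IsGalois F L := ⟨⟩
    suffices h : z ∈ Set.range (algebraMap F L) by
      obtain ⟨w, rfl⟩ := h
      exact w.2
    rw [InfiniteGalois.mem_range_algebraMap_iff_fixed]
    intro φ
    obtain ⟨σ, hσ⟩ := aux_exists_group ρ ι Ax (φ : L →+* L) (by
      intro p hp hinv
      obtain ⟨w, hw⟩ := hInvx p hp hinv
      rw [← hw]
      exact φ.commutes w) hmul hone hAx (fun j => X (Sum.inl j)) hXx
    obtain ⟨τ, hτ⟩ := aux_exists_group ρ ι Ay (φ : L →+* L) (by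
      intro p hp hinv
      obtain ⟨w, hw⟩ := hInvy p hp hinv
      rw [← hw]
      exact φ.commutes w) hmul hone hAy (fun j => X (Sum.inr j)) hXy
    have hφu : φ (ι (∑ j : Fin n, X (Sum.inl j) * X (Sum.inr j))) =
        ι (∑ j : Fin n, X (Sum.inl j) * X (Sum.inr j)) := φ.commutes ⟨_, hu⟩
    have hστ : (σ : GL (Fin n) K) = τ := by
      apply eq_of_pairing
      apply hιinj
      rw [← hφu]
      simp only [map_sum, _root_.map_mul]
      refine Finset.sum_congr rfl fun j _ => ?_
      exact congrArg₂ (· * ·) (hσ j).symm (hτ j).symm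
    have hcomp : ∀ p, φ (ι p) = ι (gact K n σ p) := by
      intro p
      have : ((φ.restrictScalars K : L →ₐ[K] L).comp
          (Algebra.algHom K (MvPolynomial (Fin n ⊕ Fin n) K) L)) =
          (Algebra.algHom K (MvPolynomial (Fin n ⊕ Fin n) K) L).comp (gact K n σ) := by
        apply algHom_ext
        rintro (j | j)
        · exact hσ j
        · rw [hστ]; exact hτ j
      exact DFunLike.congr_fun this p
    have hz' := hz σ σ.2
    refine Eq.trans ?_ hz'
    obtain ⟨p, q, hq, rfl⟩ := IsFractionRing.div_surjective
        (A := MvPolynomial (Fin n ⊕ Fin n) K) z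
    rw [map_div₀ (gactFrac K n σ), gactFrac_algebraMap, gactFrac_algebraMap]
    exact (map_div₀ φ (ι p) (ι q)).trans (congrArg₂ (· / ·) (hcomp p) (hcomp q))
  · intro hz σ hσ
    refine IntermediateField.adjoin_induction K
      (p := fun w _ => gactFrac K n σ w = w) ?_ ?_ ?_ ?_ ?_ hz
    · rintro _ ⟨p, hp, rfl⟩
      rw [gactFrac_algebraMap]
      congr 1
      rcases hp with (⟨i, rfl⟩ | ⟨i, rfl⟩) | hp
      · exact (hf₁ i).2 σ hσ
      · obtain ⟨τ, hτ, h⟩ := hstar σ hσ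
        change gact K n σ (starInvol K n (f i)) = starInvol K n (f i)
        rw [gact_starInvol K n σ τ h, (hf₁ i).2 τ hτ]
      · rw [Set.mem_singleton_iff.1 hp]
        exact gact_pairing K n σ
    · intro w
      exact (gactFrac K n σ).commutes w
    · intro x y _ _ hx hy
      rw [map_add, hx, hy]
    · intro x _ hx
      rw [map_inv₀, hx]
    · intro x y _ _ hx hy
      rw [_root_.map_mul, hx, hy]
end

section
/- Let K be a field and A an ℕ-graded commutative K-algebra that is an integral domain. Let f_1,…,f_n, g_1,…,g_m, h_1,…,h_l ∈ A be homogeneous elements of positive degree such that: (i) f_1,…,f_n,g_1,…,g_m form a homogeneous system of parameters of A, i.e., they are algebraically independent over K and A is integral over the K-subalgebra they generate; (ii) the fraction field satisfies Quot(A) = K(f_1,…,f_n,g_1,…,g_m,h_1,…,h_l). Let P := K[X_1,…,X_n,Y_1,…,Y_m,Z_1,…,Z_l] be a polynomial ring, graded by assigning to X_i, Y_i, Z_i the degrees of f_i, g_i, h_i, and let φ: P → A be the K-algebra homomorphism with X_i ↦ f_i, Y_i ↦ g_i, Z_i ↦ h_i. Let R_1,…,R_l be homogeneous elements of ker(φ)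 such that: (iii) X_1,…,X_n, Y_1,…,Y_m, R_1,…,R_l form a homogeneous system of parameters of P; (iv) writing B := P/(R_1,…,R_l) and X̄_i, Ȳ_i for the classes of X_i, Y_i in B, and setting x := X̄_1⋯X̄_n and y := Ȳ_1⋯Ȳ_m, the localization B[x^{-1}] is generated as a K-algebra by x^{-1}, X̄_1,…,X̄_n, and m further elements, and B[y^{-1}] is generated as a K-algebra by y^{-1}, Ȳ_1,…,Ȳ_m, and n further elements. Then A = K[f_1,…,f_n,g_1,…,g_m,h_1,…,h_l] (A equals the K-subalgebra generated by these elements) and the kernel of φ is generated by R_1,…,R_l. -/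
open MvPolynomial


namespace LP

/-- `RegSeq I as`: the list `as` is a (weakly) regular sequence modulo `I`. -/
def RegSeq {O : Type*} [CommRing O] : Ideal O → List O → Prop
  | _, [] => True
  | I, a :: as => (∀ p, a * p ∈ I → p ∈ I) ∧ RegSeq (I ⊔ Ideal.span {a}) as

section CM
variable {O : Type*} [CommRing O]

lemma regSeq_append (as bs : List O) : ∀ I : Ideal O,
    RegSeq I (as ++ bs) ↔ RegSeq I as ∧ RegSeq (I ⊔ Ideal.ofList as) bs := by
  induction as with
  | nil => intro I; simp [RegSeq]
  | cons a as ih =>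
    intro I
    simp only [List.cons_append, RegSeq, ih, Ideal.ofList_cons, sup_assoc, and_assoc]

variable [IsNoetherianRing O] [IsLocalRing O]

lemma regSeq_swap (I : Ideal O) (a b : O) (as : List O) (ha : a ∈ IsLocalRing.maximalIdeal O)
    (h : RegSeq I (a :: b :: as)) : RegSeq I (b :: a :: as) := by
  obtain ⟨h1, h2, h3⟩ := h
  refine ⟨?_, ?_, ?_⟩
  · let J : Ideal O := I.colon {b}
    have hJ : ∀ p, p ∈ J ↔ b * p ∈ I := by
      intro p
      rw [Submodule.mem_colon_singleton, smul_eq_mul, mul_comm]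
    have key : J ≤ I := by
      refine Submodule.le_of_le_smul_of_le_jacobson_bot (I := Ideal.span {a})
        (IsNoetherian.noetherian J) ?_ ?_
      · rw [IsLocalRing.jacobson_eq_maximalIdeal _ bot_ne_top, Ideal.span_singleton_le_iff_mem]
        exact ha
      · intro p hp
        rw [hJ] at hp
        obtain ⟨i, hi, q, hq, rfl⟩ := Submodule.mem_sup.1 (h2 p (Ideal.mem_sup_left hp))
        obtain ⟨q, rfl⟩ := Ideal.mem_span_singleton'.1 hq
        refine Submodule.add_mem_sup hi ?_
        rw [mul_comm q a]
        refine Ideal.mul_mem_mul (Ideal.mem_span_singleton_self a) ((hJ q).2 (h1 _ ?_))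
        have : a * (b * q) = b * (i + q * a) - b * i := by ring
        rw [this]
        exact I.sub_mem hp (I.mul_mem_left _ hi)
    intro p hp
    exact key ((hJ p).2 hp)
  · intro p hp
    obtain ⟨i, hi, q', hq, e⟩ := Submodule.mem_sup.1 hp
    obtain ⟨q, rfl⟩ := Ideal.mem_span_singleton'.1 hq
    have : q ∈ I ⊔ Ideal.span {a} := by
      apply h2
      have : b * q = - i + p * a := by linear_combination e
      rw [this]
      exact Submodule.add_mem_sup (I.neg_mem hi) (Ideal.mul_mem_left _ _ (Ideal.mem_span_singleton_self a))
    obtain ⟨i', hi', r', hr, e'⟩ := Submodule.mem_sup.1 this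
    obtain ⟨r, rfl⟩ := Ideal.mem_span_singleton'.1 hr
    have h4 : p - b * r ∈ I := by
      apply h1
      have : a * (p - b * r) = i + b * i' := by linear_combination -e - b * e'
      rw [this]
      exact I.add_mem hi (I.mul_mem_left _ hi')
    have : p = (p - b * r) + r * b := by ring
    rw [this]
    exact Submodule.add_mem_sup h4 (Ideal.mul_mem_left _ _ (Ideal.mem_span_singleton_self b))
  · rwa [sup_assoc, sup_comm (Ideal.span {b}), ← sup_assoc]

lemma regSeq_perm {as bs : List O} (hp : as.Perm bs) :
    ∀ I : Ideal O, (∀ a ∈ as, a ∈ IsLocalRing.maximalIdeal O) → RegSeq I as → RegSeq I bs := by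
  induction hp with
  | nil => intro I _ h; exact h
  | cons x _ ih =>
    intro I hm h
    exact ⟨h.1, ih _ (fun a ha => hm a (List.mem_cons_of_mem _ ha)) h.2⟩
  | swap x y l =>
    intro I hm h
    exact regSeq_swap I _ _ _ (hm _ (by simp)) h
  | trans h1 _ ih1 ih2 =>
    intro I hm h
    exact ih2 I (fun a ha => hm a (h1.mem_iff.2 ha)) (ih1 I hm h)

lemma regSeq_exchange (I : Ideal O) (as : List O) (a b : O)
    (ha : a ∈ IsLocalRing.maximalIdeal O)
    (hr : IsLocalRing.maximalIdeal O ≤ (I ⊔ Ideal.ofList as ⊔ Ideal.span {b}).radical)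
    (h : RegSeq I (as ++ [a])) : RegSeq I (as ++ [b]) := by
  rw [regSeq_append] at h ⊢
  refine ⟨h.1, ?_, trivial⟩
  intro p hp
  have h2 := h.2.1
  obtain ⟨k, hk⟩ := hr ha
  obtain ⟨i, hi, q', hq, e⟩ := Submodule.mem_sup.1 hk
  obtain ⟨q, rfl⟩ := Ideal.mem_span_singleton'.1 hq
  have : a ^ k * p ∈ I ⊔ Ideal.ofList as := by
    rw [← e, add_mul, mul_assoc]
    exact Ideal.add_mem _ (Ideal.mul_mem_right _ _ hi) (Ideal.mul_mem_left _ _ hp)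
  clear hk e
  induction k with
  | zero => simpa using this
  | succ k ih =>
    apply ih
    apply h2
    rw [← mul_assoc, ← pow_succ']
    exact this

lemma rad_of_avoid (J : Ideal O) (a c : O)
    (ha : a ∈ IsLocalRing.maximalIdeal O)
    (hr : IsLocalRing.maximalIdeal O ≤ (J ⊔ Ideal.span {a}).radical)
    (hc : ∀ p ∈ J.minimalPrimes, c ∉ p) :
    IsLocalRing.maximalIdeal O ≤ (J ⊔ Ideal.span {c}).radical := by
  rw [Ideal.radical_eq_sInf]
  refine le_sInf ?_
  rintro q ⟨hq, hqp⟩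
  have hJq : J ≤ q := le_sup_left.trans hq
  have hcq : c ∈ q := hq (Ideal.mem_sup_right (Ideal.mem_span_singleton_self c))
  obtain ⟨p, hp, hpq⟩ := Ideal.exists_minimalPrimes_le hJq
  have hpP : p.IsPrime := hp.isPrime
  have hlt : p < q := lt_of_le_of_ne hpq (fun e => hc p hp (e ▸ hcq))
  have hqm : q ≤ IsLocalRing.maximalIdeal O := IsLocalRing.le_maximalIdeal hqp.ne_top
  have hmin : IsLocalRing.maximalIdeal O ∈ (p ⊔ Ideal.span {a}).minimalPrimes := by
    refine ⟨⟨inferInstance, sup_le (hpq.trans hqm) ?_⟩, ?_⟩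
    · rwa [Ideal.span_singleton_le_iff_mem]
    · rintro r ⟨hr1, hr2⟩ _
      refine hr.trans ?_
      rw [hr1.radical_le_iff]
      exact (sup_le_sup_right hp.le _).trans hr2
  have hh := Ideal.map_height_le_one_of_mem_minimalPrimes hmin
  by_contra hne
  have hlt2 : q < IsLocalRing.maximalIdeal O := lt_of_le_of_ne hqm (fun e => hne e.ge)
  have key : ∀ r : Ideal O, p ≤ r → (r.map (Ideal.Quotient.mk p)).comap (Ideal.Quotient.mk p) = r := by
    intro r hr
    rw [Ideal.comap_map_of_surjective _ Ideal.Quotient.mk_surjective, ← RingHom.ker_eq_comap_bot,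
      Ideal.mk_ker, sup_eq_left.2 hr]
  have hq' : (q.map (Ideal.Quotient.mk p)).IsPrime :=
    Ideal.map_isPrime_of_surjective Ideal.Quotient.mk_surjective (by rwa [Ideal.mk_ker])
  have hm' : ((IsLocalRing.maximalIdeal O).map (Ideal.Quotient.mk p)).IsPrime :=
    Ideal.map_isPrime_of_surjective Ideal.Quotient.mk_surjective (by rw [Ideal.mk_ker]; exact hpq.trans hqm)
  have l1 : (⊥ : Ideal (O ⧸ p)) < q.map (Ideal.Quotient.mk p) := by
    rw [bot_lt_iff_ne_bot]
    intro e
    have := key q hpq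
    rw [e, ← RingHom.ker_eq_comap_bot, Ideal.mk_ker] at this
    exact hlt.ne this
  have l2 : q.map (Ideal.Quotient.mk p) < (IsLocalRing.maximalIdeal O).map (Ideal.Quotient.mk p) := by
    refine lt_of_le_of_ne (Ideal.map_mono hqm) ?_
    intro e
    have := key q hpq
    rw [e, key _ (hpq.trans hqm)] at this
    exact hlt2.ne this.symm
  have i1 := Ideal.height_add_one_le_of_lt_of_isPrime l1
  have i2 := Ideal.height_add_one_le_of_lt_of_isPrime l2
  have i3 : (1 : ℕ∞) + 1 ≤ 1 := by
    refine le_trans ?_ (i2.trans hh)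
    gcongr
    exact le_trans (by simp) i1
  exact absurd i3 (by decide)

lemma exists_avoid (J₁ J₂ : Ideal O)
    (h1 : ¬ IsLocalRing.maximalIdeal O ≤ J₁.radical) (h2 : ¬ IsLocalRing.maximalIdeal O ≤ J₂.radical) :
    ∃ c ∈ IsLocalRing.maximalIdeal O, (∀ p ∈ J₁.minimalPrimes, c ∉ p) ∧
      (∀ p ∈ J₂.minimalPrimes, c ∉ p) := by
  have fin : (J₁.minimalPrimes ∪ J₂.minimalPrimes).Finite :=
    (Ideal.finite_minimalPrimes_of_isNoetherianRing O J₁).union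
      (Ideal.finite_minimalPrimes_of_isNoetherianRing O J₂)
  have aux : ∀ J : Ideal O, ∀ p ∈ J.minimalPrimes, IsLocalRing.maximalIdeal O ≤ p →
      IsLocalRing.maximalIdeal O ≤ J.radical := by
    intro J p hp hle
    rw [Ideal.radical_eq_sInf]
    refine le_sInf ?_
    rintro q ⟨hq, hqp⟩
    exact hle.trans (hp.2 ⟨hqp, hq⟩ ((IsLocalRing.le_maximalIdeal hqp.ne_top).trans hle))
  by_contra! hcon
  have := ((IsLocalRing.maximalIdeal O).subset_union_prime_finite fin (f := id) ⊥ ⊥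
    (fun p h _ _ => by rcases h with h | h <;> exact h.isPrime)).1 (by
      intro c hc
      simp only [Set.mem_iUnion]
      by_cases hx : ∀ p ∈ J₁.minimalPrimes, c ∉ p
      · obtain ⟨p, hp, hcp⟩ := hcon c hc hx
        exact ⟨p, Or.inr hp, hcp⟩
      · push Not at hx
        obtain ⟨p, hp, hcp⟩ := hx
        exact ⟨p, Or.inl hp, hcp⟩)
  obtain ⟨p, hp | hp, hle⟩ := this
  · exact h1 (aux _ p hp hle)
  · exact h2 (aux _ p hp hle)

theorem regSeq_of_sop (N : ℕ) : ∀ (I : Ideal O) (as bs : List O), as.length = N → bs.length = N →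
    I ≤ IsLocalRing.maximalIdeal O →
    (∀ a ∈ as, a ∈ IsLocalRing.maximalIdeal O) → (∀ a ∈ bs, a ∈ IsLocalRing.maximalIdeal O) →
    IsLocalRing.maximalIdeal O ≤ (I ⊔ Ideal.ofList as).radical →
    IsLocalRing.maximalIdeal O ≤ (I ⊔ Ideal.ofList bs).radical →
    (∀ cs : List O, cs.length < N → (∀ a ∈ cs, a ∈ IsLocalRing.maximalIdeal O) →
      ¬ IsLocalRing.maximalIdeal O ≤ (I ⊔ Ideal.ofList cs).radical) →
    RegSeq I as → RegSeq I bs := by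
  induction N with
  | zero =>
    intro I as bs _ hb _ _ _ _ _ _ _
    rw [List.length_eq_zero_iff.1 hb]
    trivial
  | succ N ih =>
    intro I as bs hla hlb hI hma hmb hra hrb H hreg
    match as, bs, hla, hlb with
    | a :: as, b :: bs, hla, hlb =>
      simp only [List.length_cons, Nat.add_right_cancel_iff] at hla hlb
      simp only [List.mem_cons, forall_eq_or_imp] at hma hmb
      obtain ⟨c, hc, hc1, hc2⟩ := exists_avoid (I ⊔ Ideal.ofList as) (I ⊔ Ideal.ofList bs)
        (H as (by omega) hma.2) (H bs (by omega) hmb.2)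
      have comm : ∀ (x : O) (l : List O), I ⊔ Ideal.ofList (x :: l) = I ⊔ Ideal.ofList l ⊔ Ideal.span {x} := by
        intro x l
        rw [Ideal.ofList_cons, sup_assoc, sup_comm (Ideal.span {x})]
      have comm' : ∀ (x : O) (l : List O), I ⊔ Ideal.ofList (x :: l) = I ⊔ Ideal.span {x} ⊔ Ideal.ofList l := by
        intro x l
        rw [Ideal.ofList_cons, sup_assoc]
      rw [comm] at hra hrb
      have rca := rad_of_avoid _ a c hma.1 hra hc1
      have rcb := rad_of_avoid _ b c hmb.1 hrb hc2
      have pm : ∀ (x : O) (l : List O), (x :: l).Perm (l ++ [x]) := fun x l =>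
        (List.perm_append_singleton x l).symm
      have mem : ∀ (x : O) (l : List O), x ∈ IsLocalRing.maximalIdeal O →
          (∀ a ∈ l, a ∈ IsLocalRing.maximalIdeal O) → ∀ a ∈ x :: l, a ∈ IsLocalRing.maximalIdeal O := by
        intro x l hx hl
        simpa using ⟨hx, hl⟩
      have mem' : ∀ (x : O) (l : List O), x ∈ IsLocalRing.maximalIdeal O →
          (∀ a ∈ l, a ∈ IsLocalRing.maximalIdeal O) → ∀ a ∈ l ++ [x], a ∈ IsLocalRing.maximalIdeal O := by
        intro x l hx hl y hy
        exact mem x l hx hl y ((pm x l).mem_iff.2 hy)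
      have r1 := regSeq_perm (pm a as) I (mem _ _ hma.1 hma.2) hreg
      have r2 := regSeq_exchange I as a c hma.1 rca r1
      have r3 := regSeq_perm (pm c as).symm I (mem' _ _ hc hma.2) r2
      have r4 : RegSeq I (c :: bs) := by
        refine ⟨r3.1, ih _ as bs hla hlb ?_ hma.2 hmb.2 ?_ ?_ ?_ r3.2⟩
        · exact sup_le hI (by rwa [Ideal.span_singleton_le_iff_mem])
        · rwa [← comm', comm]
        · rwa [← comm', comm]
        · intro cs hcs hcm
          rw [← comm']
          exact H _ (by simpa using hcs) (mem _ _ hc hcm)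
      have r5 := regSeq_perm (pm c bs) I (mem _ _ hc hmb.2) r4
      have r6 := regSeq_exchange I bs c b hc hrb r5
      exact regSeq_perm (pm b bs).symm I (mem' _ _ hmb.1 hmb.2) r6

end CM
end LP

namespace LP
section Poly
variable {K : Type*} [Field K] {σ : Type*}

lemma cancel_const (w : σ → ℕ) (hw : ∀ i, 0 < w i) (J : Ideal (MvPolynomial σ K))
    (hJ : ∀ p ∈ J, ∀ d, weightedHomogeneousComponent w d p ∈ J)
    (s p : MvPolynomial σ K) (hs : constantCoeff s ≠ 0) (hsp : s * p ∈ J) : p ∈ J := by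
  let _ := weightedGradedAlgebra K w
  have hmul : ∀ d, weightedHomogeneousComponent w d (s * p) =
      ∑ ij ∈ Finset.HasAntidiagonal.antidiagonal d, weightedHomogeneousComponent w ij.1 s *
        weightedHomogeneousComponent w ij.2 p := by
    intro d
    have := DirectSum.coe_mul_apply_eq_sum_antidiagonal (weightedHomogeneousSubmodule K w)
      (DirectSum.decompose _ s) (DirectSum.decompose _ p) d
    rw [← DirectSum.decompose_mul] at this
    have e : ∀ (φ : MvPolynomial σ K) (m : ℕ),
        ((DirectSum.decompose (weightedHomogeneousSubmodule K w) φ m : _) : MvPolynomial σ K)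
        = weightedHomogeneousComponent w m φ := weightedDecomposition.decompose'_apply K w
    simpa only [e] using this
  have key : ∀ d, weightedHomogeneousComponent w d p ∈ J := by
    intro d
    induction d using Nat.strong_induction_on with
    | _ d ih =>
      have h1 := hJ _ hsp d
      rw [hmul, ← Finset.add_sum_erase _ _ (show ((0, d) : ℕ × ℕ) ∈ Finset.HasAntidiagonal.antidiagonal d by simp)] at h1
      have h2 : ∑ ij ∈ (Finset.HasAntidiagonal.antidiagonal d).erase (0, d), weightedHomogeneousComponent w ij.1 s *
        weightedHomogeneousComponent w ij.2 p ∈ J := by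
        refine J.sum_mem ?_
        rintro ⟨i, j⟩ hij
        refine J.mul_mem_left _ (ih _ ?_)
        simp only [Finset.mem_erase, Finset.HasAntidiagonal.mem_antidiagonal, ne_eq, Prod.mk.injEq, not_and] at hij
        dsimp only
        omega
      have h3 := (Submodule.add_mem_iff_left J h2).1 h1
      rw [weightedHomogeneousComponent_zero (w := w) s (fun i => (hw i).ne')] at h3
      have h4 := J.mul_mem_left (C (coeff 0 s)⁻¹) h3
      rw [← mul_assoc, ← C_mul, inv_mul_cancel₀ (by simpa [constantCoeff_eq] using hs), C_1, one_mul] at h4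
      exact h4
  rw [← sum_weightedHomogeneousComponent w p, finsum_eq_sum _ (weightedHomogeneousComponent_finsupp p)]
  exact J.sum_mem (fun d _ => key d)

lemma homog_span (w : σ → ℕ) (S : Set (MvPolynomial σ K))
    (hS : ∀ p ∈ S, ∃ e, IsWeightedHomogeneous w p e) :
    ∀ p ∈ Ideal.span S, ∀ d, weightedHomogeneousComponent w d p ∈ Ideal.span S := by
  let _ := weightedGradedAlgebra K w
  have := Ideal.homogeneous_span (weightedHomogeneousSubmodule K w) S
    (fun x hx => by obtain ⟨e, he⟩ := hS x hx; exact ⟨e, he⟩)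
  intro p hp d
  have e : ∀ (φ : MvPolynomial σ K) (m : ℕ),
        ((DirectSum.decompose (weightedHomogeneousSubmodule K w) φ m : _) : MvPolynomial σ K)
        = weightedHomogeneousComponent w m φ := weightedDecomposition.decompose'_apply K w
  rw [← e]
  exact this d hp

/-- kill the variables in `s`. -/
lemma mem_span_X (s : Set σ) : ∃ e : MvPolynomial σ K →ₐ[K] MvPolynomial σ K,
    (∀ i ∉ s, e (X i) = X i) ∧ RingHom.ker e = Ideal.span (X '' s) := by
  classical
  let e : MvPolynomial σ K →ₐ[K] MvPolynomial σ K := aeval (fun i => if i ∈ s then 0 else X i)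
  have e1 : ∀ i ∈ s, e (X i) = 0 := fun i hi => by simp [e, hi]
  have e2 : ∀ i ∉ s, e (X i) = X i := fun i hi => by simp [e, hi]
  refine ⟨e, e2, le_antisymm ?_ ?_⟩
  · have : ∀ p, p - e p ∈ Ideal.span (X '' s : Set (MvPolynomial σ K)) := by
      intro p
      have h : (Ideal.Quotient.mkₐ K (Ideal.span (X '' s : Set (MvPolynomial σ K)))).comp e =
          Ideal.Quotient.mkₐ K (Ideal.span (X '' s : Set (MvPolynomial σ K))) := by
        ext i
        by_cases hi : i ∈ s
        · simp only [AlgHom.comp_apply, e1 i hi, map_zero]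
          symm
          rw [Ideal.Quotient.mkₐ_eq_mk, Ideal.Quotient.eq_zero_iff_mem]
          exact Ideal.subset_span ⟨i, hi, rfl⟩
        · simp only [AlgHom.comp_apply, e2 i hi]
      rw [← Ideal.Quotient.eq]
      exact (DFunLike.congr_fun h p).symm
    intro p hp
    have h := this p
    rwa [(RingHom.mem_ker).1 hp, sub_zero] at h
  · rw [Ideal.span_le]
    rintro _ ⟨i, hi, rfl⟩
    exact e1 i hi

lemma span_X_prime (s : Set σ) : (Ideal.span (X '' s : Set (MvPolynomial σ K))).IsPrime := by
  obtain ⟨e, -, he⟩ := mem_span_X (K := K) s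
  rw [← he]
  exact RingHom.ker_isPrime _

lemma X_notMem_span (s : Set σ) (i : σ) (hi : i ∉ s) :
    (X i : MvPolynomial σ K) ∉ Ideal.span (X '' s : Set (MvPolynomial σ K)) := by
  obtain ⟨e, h, he⟩ := mem_span_X (K := K) s
  rw [← he]
  intro h'
  rw [RingHom.mem_ker] at h'
  exact X_ne_zero i ((h i hi).symm.trans h')

lemma height_span_X [DecidableEq σ] (s : Finset σ) :
    (s.card : ℕ∞) ≤ (Ideal.span (X '' (s : Set σ) : Set (MvPolynomial σ K))).height := by
  induction s using Finset.induction_on with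
  | empty => simp
  | insert a s ha ih =>
    rw [Finset.card_insert_of_notMem ha]
    have := span_X_prime (K := K) (s : Set σ)
    have := span_X_prime (K := K) ((insert a s : Finset σ) : Set σ)
    refine le_trans ?_ (Ideal.height_add_one_le_of_lt_of_isPrime
      (I := Ideal.span (X '' (s : Set σ) : Set (MvPolynomial σ K))) ?_)
    · push_cast
      gcongr
    · refine lt_of_le_of_ne (Ideal.span_mono (Set.image_mono (by simp))) ?_
      intro e
      refine X_notMem_span (K := K) (s : Set σ) a (by simpa using ha) ?_
      rw [e]
      exact Ideal.subset_span ⟨a, by simp, rfl⟩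

variable (K σ) in
/-- The irrelevant maximal ideal. -/
noncomputable abbrev irr : Ideal (MvPolynomial σ K) := RingHom.ker (constantCoeff (σ := σ) (R := K))

instance : (irr K σ).IsPrime := RingHom.ker_isPrime _

lemma X_mem_irr (i : σ) : (X i : MvPolynomial σ K) ∈ irr K σ := by simp [irr, RingHom.mem_ker]

lemma span_X_le (s : Set σ) : Ideal.span (X '' s : Set (MvPolynomial σ K)) ≤ irr K σ := by
  rw [Ideal.span_le]
  rintro _ ⟨i, -, rfl⟩
  exact X_mem_irr i

lemma regSeq_X (L : List σ) : ∀ s : Set σ, L.Nodup → (∀ i ∈ L, i ∉ s) →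
    RegSeq ((Ideal.span (X '' s : Set (MvPolynomial σ K))).map
      (algebraMap _ (Localization.AtPrime (irr K σ))))
      (L.map (fun i => algebraMap (MvPolynomial σ K) (Localization.AtPrime (irr K σ)) (X i))) := by
  induction L with
  | nil => intros; trivial
  | cons i L ih =>
    intro s hL hs
    rw [List.nodup_cons] at hL
    simp only [List.mem_cons, forall_eq_or_imp] at hs
    have hdis : Disjoint ((irr K σ).primeCompl : Set (MvPolynomial σ K))
        (Ideal.span (X '' s : Set (MvPolynomial σ K))) := by
      rw [Set.disjoint_left]
      intro p hp hp'
      exact hp (span_X_le s hp')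
    have hpr := IsLocalization.isPrime_of_isPrime_disjoint (irr K σ).primeCompl
      (Localization.AtPrime (irr K σ)) _ (span_X_prime (K := K) s) hdis
    have hco := IsLocalization.under_map_of_isPrime_disjoint (irr K σ).primeCompl
      (Localization.AtPrime (irr K σ)) (span_X_prime (K := K) s) hdis
    refine ⟨?_, ?_⟩
    · intro p hp
      refine (hpr.mem_or_mem hp).resolve_left ?_
      intro h
      refine X_notMem_span (K := K) s i hs.1 ?_
      rw [← hco]
      exact h
    · have := ih (insert i s) hL.2 (by
        intro j hj
        simp only [Set.mem_insert_iff, not_or]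
        exact ⟨fun e => hL.1 (e ▸ hj), hs.2 j hj⟩)
      rw [Set.image_insert_eq, Ideal.span_insert, Ideal.map_sup, Ideal.map_span, Set.image_singleton,
        sup_comm] at this
      exact this

lemma regSeq_descend (w : σ → ℕ) (hw : ∀ i, 0 < w i) (L : List (MvPolynomial σ K)) :
    ∀ S : Set (MvPolynomial σ K), (∀ p ∈ S, ∃ e, IsWeightedHomogeneous w p e) →
    (∀ p ∈ L, ∃ e, IsWeightedHomogeneous w p e) →
    RegSeq ((Ideal.span S).map (algebraMap _ (Localization.AtPrime (irr K σ))))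
      (L.map (algebraMap _ (Localization.AtPrime (irr K σ)))) → RegSeq (Ideal.span S) L := by
  induction L with
  | nil => intros; trivial
  | cons a L ih =>
    intro S hS hL hr
    simp only [List.mem_cons, forall_eq_or_imp] at hL
    refine ⟨?_, ?_⟩
    · intro p hp
      have := hr.1 (algebraMap _ _ p) (by rw [← map_mul]; exact Ideal.mem_map_of_mem _ hp)
      rw [IsLocalization.algebraMap_mem_map_algebraMap_iff (irr K σ).primeCompl] at this
      obtain ⟨s, hs, hsp⟩ := this
      exact cancel_const w hw _ (homog_span w S hS) s p hs hsp
    · have := ih (insert a S) (by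
        simp only [Set.mem_insert_iff, forall_eq_or_imp]
        exact ⟨hL.1, hS⟩) hL.2 (by
        rw [Ideal.span_insert, Ideal.map_sup, Ideal.map_span, Set.image_singleton, sup_comm]
        exact hr.2)
      rwa [Ideal.span_insert, sup_comm] at this

lemma maximal_of_integral (θ : Set (MvPolynomial σ K))
    (h_int : ∀ p : MvPolynomial σ K, IsIntegral (Algebra.adjoin K θ) p)
    (q : Ideal (MvPolynomial σ K)) [q.IsPrime] (hq : θ ⊆ q) : q.IsMaximal := by
  have : Algebra.IsIntegral K (MvPolynomial σ K ⧸ q) := by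
    refine ⟨fun z => ?_⟩
    obtain ⟨p, rfl⟩ := Ideal.Quotient.mk_surjective z
    obtain ⟨f, hf, hfp⟩ := h_int p
    have hb : ∀ s : Algebra.adjoin K θ, ∃ c : K,
        Ideal.Quotient.mk q (s : MvPolynomial σ K) = algebraMap K _ c := by
      intro s
      have : (Ideal.Quotient.mkₐ K q) s ∈ (Algebra.adjoin K θ).map (Ideal.Quotient.mkₐ K q) :=
        ⟨s, s.2, rfl⟩
      rw [AlgHom.map_adjoin] at this
      have h0 : Algebra.adjoin K ((Ideal.Quotient.mkₐ K q) '' θ) ≤ ⊥ := by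
        rw [Algebra.adjoin_le_iff]
        rintro _ ⟨t, ht, rfl⟩
        have : (Ideal.Quotient.mkₐ K q) t = 0 := Ideal.Quotient.eq_zero_iff_mem.2 (hq ht)
        rw [this]
        exact zero_mem _
      obtain ⟨c, hc⟩ := Algebra.mem_bot.1 (h0 this)
      exact ⟨c, hc.symm⟩
    have hi2 : IsIntegral ((algebraMap K (MvPolynomial σ K ⧸ q)).range) (Ideal.Quotient.mk q p) := by
      let g : Algebra.adjoin K θ →+* (algebraMap K (MvPolynomial σ K ⧸ q)).range :=
        ((Ideal.Quotient.mk q).comp (algebraMap (Algebra.adjoin K θ) (MvPolynomial σ K))).codRestrict _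
          (fun s => by obtain ⟨c, hc⟩ := hb s; exact ⟨c, hc.symm⟩)
      refine ⟨f.map g, hf.map g, ?_⟩
      rw [Polynomial.eval₂_map]
      have e := Polynomial.hom_eval₂ f (algebraMap (Algebra.adjoin K θ) (MvPolynomial σ K)) (Ideal.Quotient.mk q) p
      rw [hfp, map_zero] at e
      exact e.symm
    obtain ⟨f2, hf2, hf2p⟩ := hi2
    obtain ⟨f3, hf3, _, hf3m⟩ := Polynomial.lifts_and_degree_eq_and_monic
      (f := (algebraMap K (MvPolynomial σ K ⧸ q)).rangeRestrict) (p := f2) (by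
        rw [Polynomial.lifts_iff_coeff_lifts]
        intro k
        exact RingHom.rangeRestrict_surjective _ _) hf2
    refine ⟨f3, hf3m, ?_⟩
    rw [← hf2p, ← hf3, Polynomial.eval₂_map]
    rfl
  have hfield : IsField (MvPolynomial σ K ⧸ q) :=
    isField_of_isIntegral_of_isField' (R := K) (Field.toIsField K)
  exact Ideal.Quotient.maximal_of_isField _ hfield

theorem regSeq_poly [Fintype σ] [DecidableEq σ] (w : σ → ℕ) (hw : ∀ i, 0 < w i)
    (L : List (MvPolynomial σ K)) (hlen : L.length = Fintype.card σ)
    (hL : ∀ p ∈ L, ∃ e, 0 < e ∧ IsWeightedHomogeneous w p e)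
    (h_int : ∀ p : MvPolynomial σ K, IsIntegral (Algebra.adjoin K {q | q ∈ L}) p) :
    RegSeq ⊥ L := by
  have hLm : ∀ p ∈ L, p ∈ irr K σ := by
    intro p hp
    obtain ⟨e, he, hh⟩ := hL p hp
    rw [RingHom.mem_ker, constantCoeff_eq]
    exact hh.coeff_eq_zero 0 (by simp; omega)
  have main := regSeq_descend w hw L ∅ (by simp) (fun p hp => by
    obtain ⟨e, -, hh⟩ := hL p hp; exact ⟨e, hh⟩)
  rw [Ideal.span_empty, Ideal.map_bot] at main
  apply main
  let O := Localization.AtPrime (irr K σ)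
  have hmm : ∀ p, p ∈ irr K σ → algebraMap _ O p ∈ IsLocalRing.maximalIdeal O := fun p hp =>
    (IsLocalization.AtPrime.to_map_mem_maximal_iff O (irr K σ) p).2 hp
  have hrad : ∀ M : List (MvPolynomial σ K), (∀ p ∈ M, p ∈ irr K σ) →
      (∀ p : MvPolynomial σ K, IsIntegral (Algebra.adjoin K {q | q ∈ M}) p) →
      IsLocalRing.maximalIdeal O ≤ (⊥ ⊔ Ideal.ofList (M.map (algebraMap _ O))).radical := by
    intro M hM hi
    rw [Ideal.radical_eq_sInf]
    refine le_sInf ?_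
    rintro q ⟨hq, hqp⟩
    have h1 : (q.under (MvPolynomial σ K)).IsMaximal := by
      refine maximal_of_integral _ hi _ ?_
      intro p hp
      refine hq (Ideal.mem_sup_right (Ideal.subset_span ?_))
      exact List.mem_map_of_mem hp
    have h2 : q.under (MvPolynomial σ K) ≤ irr K σ := by
      refine le_of_le_of_eq ?_ (IsLocalization.AtPrime.under_maximalIdeal O (irr K σ))
      exact Ideal.comap_mono (IsLocalRing.le_maximalIdeal hqp.ne_top)
    have h3 := h1.eq_of_le (Ideal.IsPrime.ne_top inferInstance) h2
    rw [← IsLocalization.map_under (irr K σ).primeCompl O q, h3]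
    rw [Localization.AtPrime.map_eq_maximalIdeal]
  refine regSeq_of_sop (Fintype.card σ) ⊥
    ((Finset.univ.toList : List σ).map (fun i => algebraMap (MvPolynomial σ K) O (X i))) _ (by simp) (by simpa using hlen)
    bot_le ?_ ?_ ?_ (hrad L hLm h_int) ?_ ?_
  · intro a ha
    obtain ⟨i, -, rfl⟩ := List.mem_map.1 ha
    exact hmm _ (X_mem_irr i)
  · intro a ha
    obtain ⟨i, hi, rfl⟩ := List.mem_map.1 ha
    exact hmm _ (hLm i hi)
  · have := hrad ((Finset.univ.toList : List σ).map X) (by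
      intro p hp
      obtain ⟨i, -, rfl⟩ := List.mem_map.1 hp
      exact X_mem_irr i) (by
      intro p
      have : p ∈ Algebra.adjoin K {q | q ∈ (Finset.univ.toList : List σ).map (X (R := K))} := by
        have e : {q | q ∈ (Finset.univ.toList : List σ).map (X (R := K))} = Set.range X := by
          ext; simp
        rw [e, adjoin_range_X]
        trivial
      exact isIntegral_algebraMap (x := (⟨p, this⟩ : Algebra.adjoin K _)))
    rw [List.map_map] at this
    exact this
  · intro cs hcs hcm hle
    rw [bot_sup_eq] at hle
    have hmin : IsLocalRing.maximalIdeal O ∈ (Ideal.ofList cs).minimalPrimes := by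
      refine ⟨⟨inferInstance, Ideal.span_le.2 hcm⟩, ?_⟩
      rintro r ⟨hr1, hr2⟩ _
      exact hle.trans (hr1.radical_le_iff.2 hr2)
    classical
    have e : Ideal.ofList cs = Ideal.span (cs.toFinset : Set O) := by
      unfold Ideal.ofList; congr 1; ext; simp
    rw [e] at hmin
    have h1 := Ideal.height_le_card_of_mem_minimalPrimes_span_finset hmin
    have h2 : (IsLocalRing.maximalIdeal O).height = (irr K σ).height := by
      have := IsLocalRing.maximalIdeal_height_eq_ringKrullDim (R := O)
      rw [IsLocalization.AtPrime.ringKrullDim_eq_height (irr K σ) O] at this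
      exact_mod_cast this
    have h3 := (height_span_X (K := K) (Finset.univ : Finset σ)).trans (Ideal.height_mono (span_X_le _))
    rw [h2] at h1
    have h4 := h3.trans h1
    have h5 : Fintype.card σ ≤ cs.toFinset.card := by exact_mod_cast h4
    have := List.toFinset_card_le cs
    omega
  · have := regSeq_X (K := K) (Finset.univ.toList : List σ) ∅ (Finset.nodup_toList _) (by simp)
    rwa [Set.image_empty, Ideal.span_empty, Ideal.map_bot] at this
end Poly
end LP

namespace LP
section Side

theorem side {K B F S : Type*} [Field K] [CommRing B] [Algebra K B] [Field F] [Algebra K F]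
    (ψ : B →ₐ[K] F) {σ τ ι : Type} [Fintype σ] [Fintype τ] [Fintype ι] (Xs : σ → B)
    (x : B) (hxe : x = ∏ i, Xs i) (hx : ψ x ≠ 0)
    [CommRing S] [Algebra B S] [Algebra K S] [IsScalarTower K B S] [IsLocalization.Away x S]
    (extra : τ → S)
    (hgen : ∀ b : S, b ∈ Algebra.adjoin K (insert (IsLocalization.Away.invSelf (S := S) x)
      ((Set.range fun i => algebraMap B S (Xs i)) ∪ Set.range extra)))
    (t : ι → F) (ht : IsTranscendenceBasis K t) (hcard : Fintype.card σ + Fintype.card τ = Fintype.card ι)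
    (htop : ∀ z : F, z ∈ IntermediateField.adjoin K (Set.range ψ)) :
    (∀ b, ψ b = 0 → ∃ k : ℕ, x ^ k * b = 0) ∧
    (∀ α : F, IsIntegral ψ.range α → ∃ (b : B) (k : ℕ), α * ψ x ^ k = ψ b) := by
  have hunit : ∀ y : Submonoid.powers x, IsUnit (ψ y) := by
    rintro ⟨_, k, rfl⟩
    show IsUnit (ψ (x ^ k))
    rw [map_pow]
    exact (isUnit_iff_ne_zero.2 hx).pow k
  let ψx : S →ₐ[K] F := IsLocalization.liftAlgHom (M := Submonoid.powers x) (f := ψ) hunit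
  have hψx : ∀ b, ψx (algebraMap B S b) = ψ b := fun b => by
    simp [ψx, IsLocalization.liftAlgHom_apply]
  let v : σ ⊕ τ → S := Sum.elim (fun i => algebraMap B S (Xs i)) extra
  let u : σ ⊕ τ → F := ψx ∘ v
  have hu : ∀ q : MvPolynomial (σ ⊕ τ) K, aeval u q = ψx (aeval v q) := by
    intro q
    exact MvPolynomial.comp_aeval_apply v ψx q |>.symm
  have hxq : aeval v (∏ i, X (Sum.inl i) : MvPolynomial (σ ⊕ τ) K) = algebraMap B S x := by
    simp [v, hxe]
  -- every element of `S` is a quotient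
  have h1 : ∀ b : S, ∃ (k : ℕ) (q : MvPolynomial (σ ⊕ τ) K), algebraMap B S x ^ k * b = aeval v q := by
    intro b
    induction hgen b using Algebra.adjoin_induction with
    | mem y hy =>
      rcases hy with rfl | ⟨i, rfl⟩ | ⟨i, rfl⟩
      · exact ⟨1, 1, by simp [IsLocalization.Away.mul_invSelf]⟩
      · exact ⟨0, X (Sum.inl i), by simp [v]⟩
      · exact ⟨0, X (Sum.inr i), by simp [v]⟩
    | algebraMap r => exact ⟨0, C r, by simp⟩
    | add y z _ _ hy hz =>
      obtain ⟨k, q, h⟩ := hy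
      obtain ⟨k', q', h'⟩ := hz
      refine ⟨k + k', (∏ i, X (Sum.inl i)) ^ k' * q + (∏ i, X (Sum.inl i)) ^ k * q', ?_⟩
      rw [map_add, map_mul, map_mul, map_pow, map_pow, hxq, ← h, ← h']
      ring
    | mul y z _ _ hy hz =>
      obtain ⟨k, q, h⟩ := hy
      obtain ⟨k', q', h'⟩ := hz
      refine ⟨k + k', q * q', ?_⟩
      rw [map_mul, ← h, ← h']
      ring
  let S0 := Algebra.adjoin K (Set.range u)
  have hmem : ∀ q : MvPolynomial (σ ⊕ τ) K, aeval u q ∈ S0 := by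
    intro q
    simp only [S0, Algebra.adjoin_range_eq_range_aeval]
    exact ⟨q, rfl⟩
  have hw : ψ x ∈ S0 := by
    rw [← hψx, ← hxq, ← hu]
    exact hmem _
  have h2 : ∀ b : B, ∃ k : ℕ, ψ x ^ k * ψ b ∈ S0 := by
    intro b
    obtain ⟨k, q, h⟩ := h1 (algebraMap B S b)
    refine ⟨k, ?_⟩
    have := congrArg ψx h
    rw [map_mul, map_pow, hψx, hψx, ← hu] at this
    rw [this]
    exact hmem _
  have htop' : ∀ z : F, z ∈ IntermediateField.adjoin K (Set.range u) := by
    intro z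
    refine (IntermediateField.adjoin_le_iff.2 ?_ : IntermediateField.adjoin K (Set.range ψ) ≤ _) (htop z)
    rintro _ ⟨b, rfl⟩
    obtain ⟨k, hk⟩ := h2 b
    have hle := IntermediateField.algebra_adjoin_le_adjoin K (Set.range u)
    have a1 : ψ x ^ k * ψ b ∈ IntermediateField.adjoin K (Set.range u) := hle hk
    have a2 : ψ x ^ k ∈ IntermediateField.adjoin K (Set.range u) := hle (pow_mem hw k)
    have := div_mem a1 a2
    rwa [mul_div_cancel_left₀ _ (pow_ne_zero k hx)] at this
  have hfrac : IsFractionRing S0 F := by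
    refine IsFractionRing.of_field S0 F ?_
    intro z
    obtain ⟨r, hr, s, hs, rfl⟩ := IntermediateField.mem_adjoin_iff_div.1 (htop' z)
    exact ⟨⟨r, hr⟩, ⟨s, hs⟩, rfl⟩
  have halg : Algebra.IsAlgebraic S0 F := IsLocalization.isAlgebraic F (nonZeroDivisors S0)
  have hind : AlgebraicIndependent K u := by
    have := Algebra.IsAlgebraic.isTranscendenceBasis_of_lift_le_trdeg_of_finite K u (by
      rw [← ht.lift_cardinalMk_eq_trdeg]
      simp [← hcard])
    exact this.1
  refine ⟨?_, ?_⟩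
  · intro b hb
    obtain ⟨k, q, h⟩ := h1 (algebraMap B S b)
    have h3 := congrArg ψx h
    rw [map_mul, hψx, hb, mul_zero, ← hu] at h3
    have h4 : q = 0 := hind (by simpa using h3.symm)
    rw [h4, map_zero, ← map_pow, ← map_mul, ← map_zero (algebraMap B S),
      IsLocalization.eq_iff_exists (Submonoid.powers x)] at h
    obtain ⟨⟨_, j, rfl⟩, hj⟩ := h
    exact ⟨j + k, by simpa [pow_add, mul_assoc] using hj⟩
  · intro α hα
    obtain ⟨p, hp, hpα⟩ := hα
    have hcoef : ∀ i, ∃ k : ℕ, ψ x ^ k * (p.coeff i : F) ∈ S0 := by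
      intro i
      obtain ⟨b, hb⟩ := (p.coeff i).2
      obtain ⟨k, hk⟩ := h2 b
      exact ⟨k, by rw [← hb]; exact hk⟩
    choose k hk using hcoef
    let N := ∑ i ∈ p.support, k i
    have hN : ∀ i, ψ x ^ N * (p.coeff i : F) ∈ S0 := by
      intro i
      by_cases hi : i ∈ p.support
      · have : k i ≤ N := Finset.single_le_sum (f := k) (fun _ _ => Nat.zero_le _) hi
        rw [← Nat.sub_add_cancel this, pow_add, mul_assoc]
        exact mul_mem (pow_mem hw _) (hk i)
      · rw [Polynomial.notMem_support_iff.1 hi]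
        simp
    let p' : Polynomial F := p.map (algebraMap ψ.range F)
    have hp' : p'.Monic := hp.map _
    have hp'α : p'.eval₂ (RingHom.id F) α = 0 := by
      rw [Polynomial.eval₂_map]
      exact hpα
    have hroot := Polynomial.scaleRoots_eval₂_eq_zero (RingHom.id F) (s := ψ x ^ N) hp'α
    have hmonic := (Polynomial.monic_scaleRoots_iff (ψ x ^ N)).2 hp'
    have hlift : p'.scaleRoots (ψ x ^ N) ∈ Polynomial.lifts (algebraMap S0 F) := by
      rw [Polynomial.lifts_iff_coeff_lifts]
      intro i
      rw [Polynomial.coeff_scaleRoots]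
      rcases lt_or_ge i p'.natDegree with hi | hi
      · obtain ⟨j, hj⟩ := Nat.exists_eq_add_of_lt hi
        have e : p'.natDegree - i = j + 1 := by omega
        rw [e, pow_succ', mul_comm, mul_comm (ψ x ^ N), mul_assoc]
        refine ⟨⟨_, mul_mem (pow_mem (pow_mem hw N) j) (hN i)⟩, ?_⟩
        simp [p']
      · rw [Nat.sub_eq_zero_of_le hi, pow_zero, mul_one]
        rcases hi.eq_or_lt with hi | hi
        · rw [← hi, hp'.coeff_natDegree]
          exact ⟨1, map_one _⟩
        · rw [Polynomial.coeff_eq_zero_of_natDegree_lt hi]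
          exact ⟨0, map_zero _⟩
    obtain ⟨p3, hp3, _, hp3m⟩ := Polynomial.lifts_and_degree_eq_and_monic hlift hmonic
    have h_int : IsIntegral S0 (ψ x ^ N * α) := by
      refine ⟨p3, hp3m, ?_⟩
      rw [← hp3, Polynomial.eval₂_map] at hroot
      exact hroot
    have : IsIntegrallyClosed S0 := IsIntegrallyClosed.of_equiv hind.aevalEquiv.toRingEquiv
    obtain ⟨y, hy⟩ := (IsIntegrallyClosed.isIntegral_iff (R := S0) (K := F)).1 h_int
    have hy2 := y.2
    simp only [S0, Algebra.adjoin_range_eq_range_aeval] at hy2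
    obtain ⟨q, hq⟩ := hy2
    obtain ⟨j, a, hja⟩ := IsLocalization.Away.surj x (aeval v q)
    refine ⟨a, N + j, ?_⟩
    rw [← hψx a, ← hja, map_mul, ← hu, map_pow, hψx]
    have : aeval u q = ψ x ^ N * α := by rw [← hy]; exact hq
    rw [this]
    ring
end Side
end LP

namespace LP
section Fin

lemma regSeq_sub {K σ : Type*} [Field K] [Fintype σ] [DecidableEq σ] (w : σ → ℕ)
    (hw : ∀ i, 0 < w i) (θ : σ → MvPolynomial σ K)
    (hθ : ∀ i, ∃ e, 0 < e ∧ IsWeightedHomogeneous w (θ i) e)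
    (h_int : ∀ p : MvPolynomial σ K, IsIntegral (Algebra.adjoin K (Set.range θ)) p)
    (Ls : List σ) (hLs : Ls.Nodup) : RegSeq ⊥ (Ls.map θ) := by
  have hcov : ∀ i, i ∈ Ls ++ (Ls.toFinsetᶜ).toList := by
    intro i
    by_cases h : i ∈ Ls <;> simp [h]
  have key : RegSeq ⊥ ((Ls ++ (Ls.toFinsetᶜ).toList).map θ) := by
    refine regSeq_poly w hw _ ?_ ?_ ?_
    · rw [List.length_map, List.length_append, Finset.length_toList,
        ← List.toFinset_card_of_nodup hLs, Finset.card_add_card_compl]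
    · intro p hp
      obtain ⟨i, _, rfl⟩ := List.mem_map.1 hp
      exact hθ i
    · have : {q | q ∈ (Ls ++ (Ls.toFinsetᶜ).toList).map θ} = Set.range θ := by
        ext q
        constructor
        · intro hq
          obtain ⟨i, _, rfl⟩ := List.mem_map.1 hq
          exact ⟨i, rfl⟩
        · rintro ⟨i, rfl⟩
          exact List.mem_map.2 ⟨i, hcov i, rfl⟩
      rw [this]
      exact h_int
  rw [List.map_append, regSeq_append] at key
  exact key.1

lemma reg_one {K σ : Type*} [Field K] [Fintype σ] [DecidableEq σ] (w : σ → ℕ)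
    (hw : ∀ i, 0 < w i) (θ : σ → MvPolynomial σ K)
    (hθ : ∀ i, ∃ e, 0 < e ∧ IsWeightedHomogeneous w (θ i) e)
    (h_int : ∀ p : MvPolynomial σ K, IsIntegral (Algebra.adjoin K (Set.range θ)) p)
    (s : Finset σ) (a : σ) (ha : a ∉ s) (p : MvPolynomial σ K)
    (hp : θ a * p ∈ Ideal.span (θ '' s)) : p ∈ Ideal.span (θ '' s) := by
  have h := regSeq_sub w hw θ hθ h_int (s.toList ++ [a]) (by
    rw [List.nodup_append]
    refine ⟨s.nodup_toList, by simp, ?_⟩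
    intro b hb c hc
    simp only [List.mem_singleton] at hc
    subst hc
    rintro rfl
    exact ha (by simpa using hb))
  rw [List.map_append, regSeq_append] at h
  have e : Ideal.ofList (s.toList.map θ) = Ideal.span (θ '' s) := by
    unfold Ideal.ofList
    congr 1
    ext q
    simp
  rw [bot_sup_eq, e] at h
  exact h.2.1 p hp

lemma reg_two {K σ : Type*} [Field K] [Fintype σ] [DecidableEq σ] (w : σ → ℕ)
    (hw : ∀ i, 0 < w i) (θ : σ → MvPolynomial σ K)
    (hθ : ∀ i, ∃ e, 0 < e ∧ IsWeightedHomogeneous w (θ i) e)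
    (h_int : ∀ p : MvPolynomial σ K, IsIntegral (Algebra.adjoin K (Set.range θ)) p)
    (s : Finset σ) (a b : σ) (ha : a ∉ s) (hb : b ∉ s) (hab : a ≠ b) (p : MvPolynomial σ K)
    (hp : θ b * p ∈ Ideal.span (θ '' s) ⊔ Ideal.span {θ a}) :
    p ∈ Ideal.span (θ '' s) ⊔ Ideal.span {θ a} := by
  have h := reg_one w hw θ hθ h_int (insert a s) b (by simp [hb, hab.symm]) p
  rw [Finset.coe_insert, Set.image_insert_eq, Ideal.span_insert, sup_comm] at h
  exact h hp

/-- The cancellation argument in `B`. -/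
lemma dvd_prod {B σ τ : Type*} [CommRing B] [Fintype σ] [Fintype τ] (X : σ → B) (Y : τ → B)
    (hX : ∀ i b, X i * b = 0 → b = 0) (hXY : ∀ i j b, X i ∣ Y j * b → X i ∣ b) :
    (∀ k b, (∏ i, X i) ^ k * b = 0 → b = 0) ∧
    (∀ k j b, (∏ i, X i) ^ k ∣ (∏ i, Y i) ^ j * b → (∏ i, X i) ^ k ∣ b) := by
  have hYp : ∀ i b, X i ∣ (∏ j, Y j) * b → X i ∣ b := by
    intro i
    refine Finset.prod_induction Y (fun y => ∀ b, X i ∣ y * b → X i ∣ b) ?_ ?_ ?_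
    · intro y y' h h' b hb
      rw [mul_assoc] at hb
      exact h' b (h _ hb)
    · intro b hb
      simpa using hb
    · intro j _ b hb
      exact hXY i j b hb
  have hYpp : ∀ i j b, X i ∣ (∏ j, Y j) ^ j * b → X i ∣ b := by
    intro i j
    induction j with
    | zero => intro b hb; simpa using hb
    | succ j ih =>
      intro b hb
      rw [pow_succ, mul_assoc] at hb
      exact hYp i b (ih _ hb)
  let G : B → Prop := fun a => (∀ b, a * b = 0 → b = 0) ∧
      (∀ j b, a ∣ (∏ i, Y i) ^ j * b → a ∣ b)
  have Gone : G 1 := ⟨fun b hb => by simpa using hb, fun _ b _ => one_dvd b⟩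
  have Gmul : ∀ a a', G a → G a' → G (a * a') := by
    intro a a' h h'
    refine ⟨fun b hb => h'.1 b (h.1 _ (by rw [← mul_assoc]; exact hb)), ?_⟩
    intro j b hb
    obtain ⟨c, rfl⟩ := h.2 j b ((dvd_mul_right a a').trans hb)
    obtain ⟨e, he⟩ := hb
    refine mul_dvd_mul_left a (h'.2 j c ⟨e, ?_⟩)
    refine sub_eq_zero.1 (h.1 _ ?_)
    linear_combination he
  have Gprod : G (∏ i, X i) := Finset.prod_induction X G Gmul Gone
    (fun i _ => ⟨hX i, hYpp i⟩)
  have good : ∀ k, G ((∏ i, X i) ^ k) := by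
    intro k
    induction k with
    | zero => simpa using Gone
    | succ k ih =>
      rw [pow_succ]
      exact Gmul _ _ ih Gprod
  exact ⟨fun k => (good k).1, fun k => (good k).2⟩
end Fin
end LP

/-- Lemma 1.4 of the paper.  `A` is an `ℕ`-graded `K`-algebra (grading `𝒜`) which is an
integral domain; `f`, `g`, `h` are homogeneous elements of positive degrees `df`, `dg`, `dh`
such that (i) `f, g` is a homogeneous system of parameters (algebraically independent and
`A` integral over the subalgebra they generate), (ii) `Quot(A)` is generated as a field
extension of `K` by `f, g, h`; the `R i` are homogeneous elements of the kernel of the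
presentation map `φ : P = K[X,Y,Z] → A` such that (iii) `X, Y, R` is a homogeneous system
of parameters of `P` (w.r.t. the weights `df, dg, dh`) and (iv) after inverting
`x = X̄_1⋯X̄_n` (resp. `y = Ȳ_1⋯Ȳ_m`) in `B = P/(R_1,…,R_l)`, the algebra is generated by
`x⁻¹`, the `X̄_i` and `m` further elements (resp. `y⁻¹`, the `Ȳ_i` and `n` further
elements).  Then `A = K[f,g,h]` and `ker φ` is generated by the `R i`. -/
theorem lemma_presentation
    (K : Type*) [Field K] (A : Type*) [CommRing A] [IsDomain A] [Algebra K A]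
    (𝒜 : ℕ → Submodule K A) [GradedAlgebra 𝒜]
    (n m l : ℕ) (f : Fin n → A) (g : Fin m → A) (h : Fin l → A)
    (df : Fin n → ℕ) (dg : Fin m → ℕ) (dh : Fin l → ℕ)
    (hf : ∀ i, 0 < df i ∧ f i ∈ 𝒜 (df i))
    (hg : ∀ i, 0 < dg i ∧ g i ∈ 𝒜 (dg i))
    (hh : ∀ i, 0 < dh i ∧ h i ∈ 𝒜 (dh i))
    -- (i) `f, g` form a homogeneous system of parameters of `A`:
    (hsopA₁ : AlgebraicIndependent K (Sum.elim f g))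
    (hsopA₂ : ∀ a : A, IsIntegral (Algebra.adjoin K (Set.range f ∪ Set.range g)) a)
    -- (ii) the fraction field of `A` is generated over `K` by `f, g, h`:
    (hquot : ∀ z : FractionRing A,
      z ∈ IntermediateField.adjoin K
        (algebraMap A (FractionRing A) '' (Set.range f ∪ Set.range g ∪ Set.range h)))
    -- the relations `R i`: homogeneous (of positive degree, w.r.t. the grading of `P`
    -- making `φ` degree-preserving) elements of the kernel of `φ`:
    (R : Fin l → MvPolynomial (Fin n ⊕ Fin m ⊕ Fin l) K)
    (hRker : ∀ i, (aeval (Sum.elim f (Sum.elim g h))) (R i) = 0)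
    (hRhom : ∀ i, ∃ e, 0 < e ∧
      IsWeightedHomogeneous (Sum.elim df (Sum.elim dg dh)) (R i) e)
    -- (iii) `X, Y, R` form a homogeneous system of parameters of `P`:
    (hsopP₁ : AlgebraicIndependent K
      (Sum.elim (fun i : Fin n => (X (Sum.inl i) : MvPolynomial (Fin n ⊕ Fin m ⊕ Fin l) K))
        (Sum.elim (fun i : Fin m => X (Sum.inr (Sum.inl i))) R)))
    (hsopP₂ : ∀ p : MvPolynomial (Fin n ⊕ Fin m ⊕ Fin l) K,
      IsIntegral (Algebra.adjoin K (Set.range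
        (Sum.elim (fun i : Fin n => (X (Sum.inl i) : MvPolynomial (Fin n ⊕ Fin m ⊕ Fin l) K))
          (Sum.elim (fun i : Fin m => X (Sum.inr (Sum.inl i))) R)))) p)
    -- (iv) after inverting `x` (resp. `y`), `l` of the generators can be eliminated:
    (hBx : ∃ extra : Fin m → Localization.Away
        (∏ i : Fin n, (Ideal.Quotient.mk (Ideal.span (Set.range R))
          (X (Sum.inl i) : MvPolynomial (Fin n ⊕ Fin m ⊕ Fin l) K))),
      ∀ b, b ∈ Algebra.adjoin K
        (insert (IsLocalization.Away.invSelf (S := Localization.Away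
            (∏ i : Fin n, (Ideal.Quotient.mk (Ideal.span (Set.range R))
              (X (Sum.inl i) : MvPolynomial (Fin n ⊕ Fin m ⊕ Fin l) K))))
            (∏ i : Fin n, (Ideal.Quotient.mk (Ideal.span (Set.range R))
              (X (Sum.inl i) : MvPolynomial (Fin n ⊕ Fin m ⊕ Fin l) K))))
          ((Set.range fun i : Fin n => algebraMap _ _
              (Ideal.Quotient.mk (Ideal.span (Set.range R))
                (X (Sum.inl i) : MvPolynomial (Fin n ⊕ Fin m ⊕ Fin l) K))) ∪
            Set.range extra)))
    (hBy : ∃ extra : Fin n → Localization.Away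
        (∏ i : Fin m, (Ideal.Quotient.mk (Ideal.span (Set.range R))
          (X (Sum.inr (Sum.inl i)) : MvPolynomial (Fin n ⊕ Fin m ⊕ Fin l) K))),
      ∀ b, b ∈ Algebra.adjoin K
        (insert (IsLocalization.Away.invSelf (S := Localization.Away
            (∏ i : Fin m, (Ideal.Quotient.mk (Ideal.span (Set.range R))
              (X (Sum.inr (Sum.inl i)) : MvPolynomial (Fin n ⊕ Fin m ⊕ Fin l) K))))
            (∏ i : Fin m, (Ideal.Quotient.mk (Ideal.span (Set.range R))
              (X (Sum.inr (Sum.inl i)) : MvPolynomial (Fin n ⊕ Fin m ⊕ Fin l) K))))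
          ((Set.range fun i : Fin m => algebraMap _ _
              (Ideal.Quotient.mk (Ideal.span (Set.range R))
                (X (Sum.inr (Sum.inl i)) : MvPolynomial (Fin n ⊕ Fin m ⊕ Fin l) K))) ∪
            Set.range extra))) :
    (∀ a : A, a ∈ Algebra.adjoin K (Set.range f ∪ Set.range g ∪ Set.range h)) ∧
    RingHom.ker ((aeval (R := K) (Sum.elim f (Sum.elim g h))) :
        MvPolynomial (Fin n ⊕ Fin m ⊕ Fin l) K →+* A)
      = Ideal.span (Set.range R) := by
  classical
  let P := MvPolynomial (Fin n ⊕ Fin m ⊕ Fin l) K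
  let I : Ideal P := Ideal.span (Set.range R)
  let B := P ⧸ I
  let F := FractionRing A
  let θ : Fin n ⊕ Fin m ⊕ Fin l → P := Sum.elim (fun i : Fin n => (X (Sum.inl i) : P))
        (Sum.elim (fun i : Fin m => X (Sum.inr (Sum.inl i))) R)
  let w : Fin n ⊕ Fin m ⊕ Fin l → ℕ := Sum.elim df (Sum.elim dg dh)
  have hw : ∀ i, 0 < w i := by
    rintro (i | i | i)
    exacts [(hf i).1, (hg i).1, (hh i).1]
  have hθ : ∀ i, ∃ e, 0 < e ∧ IsWeightedHomogeneous w (θ i) e := by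
    rintro (i | i | i)
    · exact ⟨_, hw (Sum.inl i), isWeightedHomogeneous_X K w (Sum.inl i)⟩
    · exact ⟨_, hw (Sum.inr (Sum.inl i)), isWeightedHomogeneous_X K w (Sum.inr (Sum.inl i))⟩
    · exact hRhom i
  let s : Finset (Fin n ⊕ Fin m ⊕ Fin l) :=
    Finset.univ.image (fun i : Fin l => Sum.inr (Sum.inr i))
  have hs : Ideal.span (θ '' s) = I := by
    show _ = Ideal.span _
    congr 1
    ext q
    simp [s, θ]
  have hsX : ∀ i : Fin n, (Sum.inl i : Fin n ⊕ Fin m ⊕ Fin l) ∉ s := by simp [s]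
  have hsY : ∀ i : Fin m, (Sum.inr (Sum.inl i) : Fin n ⊕ Fin m ⊕ Fin l) ∉ s := by simp [s]
  have one := LP.reg_one w hw θ hθ hsopP₂ s
  have two := LP.reg_two w hw θ hθ hsopP₂ s
  rw [hs] at one two
  let Xb : Fin n → B := fun i => Ideal.Quotient.mk I (X (Sum.inl i))
  let Yb : Fin m → B := fun i => Ideal.Quotient.mk I (X (Sum.inr (Sum.inl i)))
  have hX : ∀ i b, Xb i * b = 0 → b = 0 := by
    intro i b hb
    obtain ⟨p, rfl⟩ := Ideal.Quotient.mk_surjective b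
    rw [← map_mul, Ideal.Quotient.eq_zero_iff_mem] at hb
    exact Ideal.Quotient.eq_zero_iff_mem.2 (one _ (hsX i) p hb)
  have hXY : ∀ i j b, Xb i ∣ Yb j * b → Xb i ∣ b := by
    intro i j b hb
    obtain ⟨p, rfl⟩ := Ideal.Quotient.mk_surjective b
    obtain ⟨c, hc⟩ := hb
    obtain ⟨q, rfl⟩ := Ideal.Quotient.mk_surjective c
    rw [← map_mul, ← map_mul, Ideal.Quotient.eq] at hc
    have := two _ _ (hsX i) (hsY j) (by simp) p (by
      refine Submodule.mem_sup.2 ⟨_, hc, _, Ideal.mem_span_singleton.2 ⟨q, rfl⟩, ?_⟩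
      exact sub_add_cancel _ _)
    obtain ⟨r, hr, z, hz, hrz⟩ := Submodule.mem_sup.1 this
    obtain ⟨d, rfl⟩ := Ideal.mem_span_singleton.1 hz
    refine ⟨Ideal.Quotient.mk I d, ?_⟩
    rw [← hrz, map_add, Ideal.Quotient.eq_zero_iff_mem.2 hr, zero_add, map_mul]
    rfl
  obtain ⟨hxnzd, hxy⟩ := LP.dvd_prod Xb Yb hX hXY
  -- the map to the fraction field
  let φ : P →ₐ[K] A := aeval (Sum.elim f (Sum.elim g h))
  have hIker : ∀ p ∈ I, φ p = 0 := by
    have : I ≤ RingHom.ker φ := by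
      refine Ideal.span_le.2 ?_
      rintro _ ⟨i, rfl⟩
      exact hRker i
    exact fun p hp => this hp
  let φb : B →ₐ[K] A := Ideal.Quotient.liftₐ I φ hIker
  let ψ : B →ₐ[K] F := (IsScalarTower.toAlgHom K A F).comp φb
  have hψmk : ∀ p : P, ψ (Ideal.Quotient.mk I p) = algebraMap A F (φ p) := fun p => rfl
  have hinjF : Function.Injective (algebraMap A F) := IsFractionRing.injective A F
  have hψX : ∀ i, ψ (Xb i) = algebraMap A F (f i) := by
    intro i
    rw [hψmk]
    exact congrArg (algebraMap A F) (aeval_X _ _)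
  have hψY : ∀ i, ψ (Yb i) = algebraMap A F (g i) := by
    intro i
    rw [hψmk]
    exact congrArg (algebraMap A F) (aeval_X _ _)
  have hne : ∀ i, Sum.elim f g i ≠ 0 := fun i => hsopA₁.ne_zero i
  have hx0 : ψ (∏ i, Xb i) ≠ 0 := by
    rw [map_prod]
    refine Finset.prod_ne_zero_iff.2 fun i _ => ?_
    rw [hψX]
    exact (map_ne_zero_iff _ hinjF).2 (hne (Sum.inl i))
  have hy0 : ψ (∏ i, Yb i) ≠ 0 := by
    rw [map_prod]
    refine Finset.prod_ne_zero_iff.2 fun i _ => ?_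
    rw [hψY]
    exact (map_ne_zero_iff _ hinjF).2 (hne (Sum.inr i))
  have hrange : ∀ a ∈ Set.range f ∪ Set.range g ∪ Set.range h,
      algebraMap A F a ∈ ψ.range := by
    rintro _ ((⟨i, rfl⟩ | ⟨i, rfl⟩) | ⟨i, rfl⟩)
    · exact ⟨Xb i, hψX i⟩
    · exact ⟨Yb i, hψY i⟩
    · exact ⟨Ideal.Quotient.mk I (X (Sum.inr (Sum.inr i))), by
        show ψ _ = _
        rw [hψmk]
        exact congrArg (algebraMap A F) (aeval_X _ _)⟩
  have htop : ∀ z : F, z ∈ IntermediateField.adjoin K (Set.range ψ) := by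
    intro z
    refine IntermediateField.adjoin.mono K _ _ ?_ (hquot z)
    rintro _ ⟨a, ha, rfl⟩
    exact hrange a ha
  let t : Fin n ⊕ Fin m → F := algebraMap A F ∘ Sum.elim f g
  have htrange : Set.range (Sum.elim f g) = Set.range f ∪ Set.range g := Set.Sum.elim_range f g
  have ht : IsTranscendenceBasis K t := by
    have h1 : IsTranscendenceBasis K (Sum.elim f g) := by
      rw [isTranscendenceBasis_iff_algebraicIndependent_isAlgebraic]
      refine ⟨hsopA₁, ⟨fun a => ?_⟩⟩
      rw [htrange]
      exact (hsopA₂ a).isAlgebraic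
    have : Algebra.IsAlgebraic A F := IsLocalization.isAlgebraic F (nonZeroDivisors A)
    exact IsTranscendenceBasis.algebraMap_comp (A := F) h1
  have h_int : ∀ a : A, IsIntegral ψ.range (algebraMap A F a) := by
    intro a
    let T := Algebra.adjoin K (Set.range f ∪ Set.range g)
    have hT : ∀ c ∈ T, algebraMap A F c ∈ ψ.range := by
      have : T ≤ ψ.range.comap (IsScalarTower.toAlgHom K A F) := by
        refine Algebra.adjoin_le ?_
        intro c hc
        exact hrange c (Or.inl hc)
      exact fun c hc => this hc
    let e : T →+* ψ.range := ((algebraMap A F).comp (algebraMap T A)).codRestrict ψ.range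
      (fun c => hT c c.2)
    obtain ⟨p, hp, hpa⟩ := hsopA₂ a
    refine ⟨p.map e, hp.map e, ?_⟩
    rw [Polynomial.eval₂_map]
    have := congrArg (algebraMap A F) hpa
    rw [Polynomial.hom_eval₂, map_zero] at this
    exact this
  obtain ⟨ex, hex⟩ := hBx
  obtain ⟨ey, hey⟩ := hBy
  obtain ⟨hk1, hi1⟩ := LP.side (S := Localization.Away (∏ i, Xb i)) ψ Xb (∏ i, Xb i) rfl hx0
    ex hex t ht (by simp) htop
  obtain ⟨_, hi2⟩ := LP.side (S := Localization.Away (∏ i, Yb i)) ψ Yb (∏ i, Yb i) rfl hy0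
    ey hey t ht (by simp [add_comm]) htop
  have hψinj : ∀ b, ψ b = 0 → b = 0 := by
    intro b hb
    obtain ⟨k, hk⟩ := hk1 b hb
    exact hxnzd k b hk
  refine ⟨?_, ?_⟩
  · intro a
    obtain ⟨b, k, hb⟩ := hi1 _ (h_int a)
    obtain ⟨c, j, hc⟩ := hi2 _ (h_int a)
    have h0 : (∏ i, Yb i) ^ j * b - (∏ i, Xb i) ^ k * c = 0 := by
      apply hψinj
      rw [map_sub, map_mul, map_mul, map_pow, map_pow, ← hb, ← hc]
      ring
    obtain ⟨d, rfl⟩ := hxy k j b ⟨c, sub_eq_zero.1 h0⟩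
    have hd : algebraMap A F a = ψ d := by
      refine mul_right_cancel₀ (pow_ne_zero k hx0) ?_
      rw [hb, map_mul, map_pow, mul_comm]
    obtain ⟨p, rfl⟩ := Ideal.Quotient.mk_surjective d
    rw [hψmk] at hd
    rw [hinjF hd]
    have hr : Set.range f ∪ Set.range g ∪ Set.range h =
        Set.range (Sum.elim f (Sum.elim g h)) := by
      rw [Set.Sum.elim_range, Set.Sum.elim_range, Set.union_assoc]
    rw [hr, Algebra.adjoin_range_eq_range_aeval]
    exact ⟨p, rfl⟩
  · refine le_antisymm ?_ hIker
    intro p hp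
    have hp' : φ p = 0 := hp
    refine Ideal.Quotient.eq_zero_iff_mem.1 (hψinj (Ideal.Quotient.mk I p) ?_)
    rw [hψmk, hp', map_zero]
end

section
/- For 1 ≤ k ≤ n and 0 ≤ i ≤ k, let d_{k,i} ∈ F_q[x_1,…,x_n] be the determinant of the k×k matrix whose rows are (x_1^{q^e},…,x_k^{q^e}) as e runs in increasing order over {0,1,…,k}\{i}. Then d_{k,i} = (∏_{j=1}^k f_j) · ( Σ_{1 ≤ j_1 < ⋯ < j_{k−i} ≤ k} ∏_{l=1}^{k−i} f̃_{j_l}^{q^{i+l−j_l}} ), where for i = k the sum on the right-hand side is interpreted as 1. -/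
open MvPolynomial

variable (F : Type) [Field F] [Fintype F] (n : ℕ)

/-- `fP F n k` is the orbit product `f_k` (1-indexed, meaningful for `1 ≤ k ≤ n`)
in `F_q[x_1,…,x_n]`. -/
noncomputable def fP (k : ℕ) : MvPolynomial (Fin n) F :=
  if h : 1 ≤ k ∧ k ≤ n then
    ∏ α : Fin (k - 1) → F,
      (X (⟨k - 1, by omega⟩ : Fin n) +
        ∑ j : Fin (k - 1), C (α j) * X (⟨j.val, by omega⟩ : Fin n))
  else 0

/-- `cP F n s t` is the Dickson-type invariant `c_{s,t}`:
the sum over strictly increasing sequences `1 ≤ j_1 < ⋯ < j_{s-t} ≤ s` (encoded as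
strictly monotone functions `Fin (s-t) → Fin s`) of `∏_l f_{j_l}^{(q-1)·q^{t+l-j_l}}`. -/
noncomputable def cP (s t : ℕ) : MvPolynomial (Fin n) F :=
  if s ≤ n then
    ∑ g ∈ Finset.univ.filter (fun g : Fin (s - t) → Fin s => ∀ a b : Fin (s - t), a < b → g a < g b),
      ∏ l : Fin (s - t),
        fP F n ((g l).val + 1) ^ ((Fintype.card F - 1) * (Fintype.card F) ^ (t + l.val - (g l).val))
  else 0

section Aux

variable {K R : Type} [Field K] [Fintype K] [CommRing R] [Algebra K R]

theorem aux_prod_field {Q : Type} [Field Q] [Algebra K Q] (A B : Q) (hb' : B ≠ 0) :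
    ∏ c : K, (A + algebraMap K Q c * B)
      = A ^ Fintype.card K - B ^ (Fintype.card K - 1) * A := by
  classical
  have hq : 1 < Fintype.card K := Fintype.one_lt_card
  have h1 : ∏ c : K, (A / B - algebraMap K Q c) = (A / B) ^ Fintype.card K - A / B := by
    have h0 : ∏ c : K, (Polynomial.X - Polynomial.C c)
        = (Polynomial.X ^ Fintype.card K - Polynomial.X : Polynomial K) := by
      rw [← Polynomial.prod_multiset_X_sub_C_of_monic_of_roots_card_eq
        (p := (Polynomial.X ^ Fintype.card K - Polynomial.X : Polynomial K))
        (Polynomial.monic_X_pow_sub (by rw [Polynomial.degree_X]; exact_mod_cast hq))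
        (by rw [FiniteField.roots_X_pow_card_sub_X,
          FiniteField.X_pow_card_sub_X_natDegree_eq K hq]; rfl),
        FiniteField.roots_X_pow_card_sub_X]
      rfl
    have h := congrArg (Polynomial.aeval (A / B)) h0
    simpa [map_prod] using h
  have h2 : ∏ c : K, (A + algebraMap K Q c * B)
      = ∏ c : K, ((A / B - algebraMap K Q c) * B) := by
    rw [← Equiv.prod_comp (Equiv.neg K)]
    refine Finset.prod_congr rfl fun c _ => ?_
    simp only [Equiv.neg_apply, map_neg]
    field_simp
    ring
  rw [h2, Finset.prod_mul_distrib, h1, Finset.prod_const, Finset.card_univ, sub_mul,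
    ← mul_pow, div_mul_cancel₀ _ hb']
  congr 1
  obtain ⟨m, hm⟩ : ∃ m, Fintype.card K = m + 1 := ⟨Fintype.card K - 1, by omega⟩
  rw [hm]
  simp only [Nat.add_sub_cancel]
  field_simp
  ring

/-- Artin-Schreier type product. -/
theorem aux_prod [IsDomain R] (a b : R) :
    ∏ c : K, (a + algebraMap K R c * b)
      = a ^ Fintype.card K - b ^ (Fintype.card K - 1) * a := by
  classical
  have hq : 1 < Fintype.card K := Fintype.one_lt_card
  by_cases hb : b = 0
  · subst hb
    have : Fintype.card K - 1 ≠ 0 := by omega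
    simp [zero_pow this]
  · apply IsFractionRing.injective R (FractionRing R)
    have hb' : algebraMap R (FractionRing R) b ≠ 0 := by
      intro h
      exact hb ((IsFractionRing.injective R (FractionRing R)) (by simpa using h))
    rw [map_prod, map_sub, map_mul, map_pow, map_pow, ← aux_prod_field (K := K) _ _ hb']
    refine Finset.prod_congr rfl fun c _ => ?_
    rw [map_add, map_mul, ← IsScalarTower.algebraMap_apply]

theorem aux_add_pow (a b : R) :
    (a + b) ^ Fintype.card K = a ^ Fintype.card K + b ^ Fintype.card K := by
  have h := (FiniteField.frobeniusAlgHom K R).map_add a b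
  simpa [FiniteField.coe_frobeniusAlgHom] using h

theorem aux_smul_pow (c : K) (a : R) :
    (algebraMap K R c * a) ^ Fintype.card K = algebraMap K R c * a ^ Fintype.card K := by
  rw [mul_pow, ← map_pow, FiniteField.pow_card]

theorem aux_sum_pow {ι : Type*} (s : Finset ι) (f : ι → R) :
    (∑ j ∈ s, f j) ^ Fintype.card K = ∑ j ∈ s, f j ^ Fintype.card K := by
  exact map_sum (FiniteField.frobeniusAlgHom K R) f s

/-- the additive polynomials, evaluated. -/
def LL (q : ℕ) (x : ℕ → R) : ℕ → R → R
  | 0, y => y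
  | e + 1, y => (LL q x e y) ^ q - (LL q x e (x e)) ^ (q - 1) * LL q x e y

/-- the coefficients of `LL`, up to sign. -/
def cc (q : ℕ) (f : ℕ → R) : ℕ → ℕ → R
  | 0, 0 => 1
  | 0, _ + 1 => 0
  | e + 1, 0 => f e ^ (q - 1) * cc q f e 0
  | e + 1, t + 1 => cc q f e t ^ q + f e ^ (q - 1) * cc q f e (t + 1)

theorem LL_add_smul (x : ℕ → R) (e : ℕ) (y z : R) (c : K) :
    LL (Fintype.card K) x e (y + algebraMap K R c * z)
      = LL (Fintype.card K) x e y + algebraMap K R c * LL (Fintype.card K) x e z := by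
  induction e with
  | zero => simp [LL]
  | succ e ih =>
    simp only [LL, ih, aux_add_pow, aux_smul_pow]
    ring

theorem LL_prod [IsDomain R] (x : ℕ → R) (e : ℕ) (y : R) :
    LL (Fintype.card K) x e y
      = ∏ α : Fin e → K, (y + ∑ j : Fin e, algebraMap K R (α j) * x j) := by
  classical
  induction e generalizing y with
  | zero => simp [LL]
  | succ e ih =>
    rw [LL, ← aux_prod (K := K)]
    rw [← Equiv.prod_comp (Fin.snocEquiv (fun _ : Fin (e + 1) => K))]
    rw [Fintype.prod_prod_type]
    refine Finset.prod_congr rfl fun c _ => ?_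
    rw [← LL_add_smul, ih]
    refine Finset.prod_congr rfl fun α _ => ?_
    rw [Fin.sum_univ_castSucc]
    simp [Fin.snocEquiv]
    ring

theorem LL_zero (x : ℕ → R) (e : ℕ) : LL (Fintype.card K) x e 0 = 0 := by
  induction e with
  | zero => rfl
  | succ e ih => simp [LL, ih]

theorem LL_vanish (x : ℕ → R) (e j : ℕ) (h : j < e) : LL (Fintype.card K) x e (x j) = 0 := by
  have hq : 0 < Fintype.card K := Fintype.card_pos
  induction e with
  | zero => omega
  | succ e ih =>
    rw [LL]
    by_cases hj : j = e
    · subst hj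
      rw [← pow_succ, Nat.sub_add_cancel hq, sub_self]
    · rw [ih (by omega)]
      simp

theorem cc_zero (f : ℕ → R) (e t : ℕ) (h : e < t) : cc (Fintype.card K) f e t = 0 := by
  induction e generalizing t with
  | zero => cases t with
    | zero => omega
    | succ t => rfl
  | succ e ih => cases t with
    | zero => omega
    | succ t => simp [cc, ih t (by omega), ih (t + 1) (by omega)]

theorem cc_self (f : ℕ → R) (e : ℕ) : cc (Fintype.card K) f e e = 1 := by
  induction e with
  | zero => rfl
  | succ e ih => simp [cc, ih, cc_zero f e (e + 1) (by omega)]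

theorem LL_sum (x : ℕ → R) (e N : ℕ) (h : e < N) (y : R) :
    LL (Fintype.card K) x e y = ∑ t ∈ Finset.range N,
      (-1) ^ (e + t) * cc (Fintype.card K) (fun j => LL (Fintype.card K) x j (x j)) e t
        * y ^ (Fintype.card K) ^ t := by
  induction e generalizing N with
  | zero =>
    rw [Finset.sum_eq_single 0]
    · simp [LL, cc]
    · intro t _ ht
      obtain ⟨s, rfl⟩ := Nat.exists_eq_succ_of_ne_zero ht
      simp [cc]
    · intro h0
      simp at h0
      omega
  | succ e ih =>
    obtain ⟨M, rfl⟩ : ∃ M, N = M + 1 := ⟨N - 1, by omega⟩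
    rw [LL]
    have hA : (LL (Fintype.card K) x e y) ^ Fintype.card K = ∑ t ∈ Finset.range M,
        (-1) ^ (e + t)
        * cc (Fintype.card K) (fun j => LL (Fintype.card K) x j (x j)) e t ^ Fintype.card K
        * y ^ (Fintype.card K) ^ (t + 1) := by
      rw [ih M (by omega), aux_sum_pow]
      refine Finset.sum_congr rfl fun t _ => ?_
      have hs : ((-1 : R) ^ (e + t)) ^ Fintype.card K = (-1) ^ (e + t) := by
        have := congrArg (algebraMap K R) (FiniteField.pow_card ((-1 : K) ^ (e + t)))
        simpa using this
      rw [mul_pow, mul_pow, hs, ← pow_mul, ← pow_succ]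
    rw [hA, ih (M + 1) (by omega), Finset.sum_range_succ', Finset.sum_range_succ', mul_add,
      Finset.mul_sum, ← sub_sub, ← Finset.sum_sub_distrib, sub_eq_add_neg]
    congr 1
    · refine Finset.sum_congr rfl fun t _ => ?_
      rw [cc]
      ring
    · rw [cc]
      ring

theorem bound_aux {m k : ℕ} (g : Fin m → Fin k) (hg : ∀ a b : Fin m, a < b → g a < g b)
    (i : ℕ) (h : m + i = k) (l : Fin m) : (g l).val ≤ i + l.val := by
  have key : ∀ d : ℕ, ∀ h' : l.val + d < m, (g l).val + d ≤ (g ⟨l.val + d, h'⟩).val := by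
    intro d
    induction d with
    | zero => intro h'; simp
    | succ d ih =>
      intro h'
      have h1 := ih (by omega)
      have h2 : g ⟨l.val + d, by omega⟩ < g ⟨l.val + (d + 1), h'⟩ := hg _ _ (by
        simp [Fin.lt_def])
      rw [Fin.lt_def] at h2
      omega
  have h1 := key (m - 1 - l.val) (by omega)
  have h2 := (g ⟨l.val + (m - 1 - l.val), by omega⟩).isLt
  omega

theorem sum_eq_cc (f : ℕ → R) (k m i : ℕ) (h : m + i = k) :
    ∑ g ∈ Finset.univ.filter (fun g : Fin m → Fin k => ∀ a b : Fin m, a < b → g a < g b),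
      ∏ l : Fin m, f (g l).val ^
        ((Fintype.card K - 1) * (Fintype.card K) ^ (i + l.val - (g l).val))
    = cc (Fintype.card K) f k i := by
  classical
  induction k generalizing m i with
  | zero =>
    obtain rfl : m = 0 := by omega
    obtain rfl : i = 0 := by omega
    simp [cc]
  | succ k ih =>
    cases m with
    | zero =>
      obtain rfl : i = k + 1 := by omega
      rw [cc_self]
      simp
    | succ m =>
      rw [← Finset.sum_filter_add_sum_filter_not _
        (fun g : Fin (m + 1) → Fin (k + 1) => g (Fin.last m) = Fin.last k)]
      have hA : f k ^ (Fintype.card K - 1) * cc (Fintype.card K) f k i = 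
        ∑ g ∈ (Finset.univ.filter (fun g : Fin (m + 1) → Fin (k + 1) =>
            ∀ a b : Fin (m + 1), a < b → g a < g b)).filter
            (fun g : Fin (m + 1) → Fin (k + 1) => g (Fin.last m) = Fin.last k),
          ∏ l : Fin (m + 1), f (g l).val ^
            ((Fintype.card K - 1) * (Fintype.card K) ^ (i + l.val - (g l).val)) := by
        rw [← ih m i (by omega), Finset.mul_sum]
        refine Finset.sum_bij (fun g _ => (Fin.snoc (fun l => (g l).castSucc) (Fin.last k) :
          Fin (m + 1) → Fin (k + 1))) ?_ ?_ ?_ ?_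
        · intro g hg
          simp only [Finset.mem_filter, Finset.mem_univ, true_and] at hg ⊢
          refine ⟨?_, by simp⟩
          intro a b hab
          induction a using Fin.lastCases with
          | last => exact absurd hab (by simp [Fin.le_last])
          | cast a =>
            induction b using Fin.lastCases with
            | last => simp [Fin.castSucc_lt_last]
            | cast b =>
              simpa using hg a b (by simpa using hab)
        · intro g _ g' _ hgg
          funext l
          have := congrFun hgg l.castSucc
          simpa using this
        · intro g hg
          simp only [Finset.mem_filter, Finset.mem_univ, true_and] at hg
          obtain ⟨hg, hl⟩ := hg
          have hlt : ∀ l : Fin m, (g l.castSucc).val < k := by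
            intro l
            have := hg l.castSucc (Fin.last m) (Fin.castSucc_lt_last l)
            rw [hl] at this
            simpa [Fin.lt_def] using this
          refine ⟨fun l => ⟨(g l.castSucc).val, hlt l⟩, ?_, ?_⟩
          · simp only [Finset.mem_filter, Finset.mem_univ, true_and]
            intro a b hab
            exact hg a.castSucc b.castSucc (by simpa using hab)
          · funext l
            induction l using Fin.lastCases with
            | last => simp [hl]
            | cast l => simp
        · intro g _
          rw [Fin.prod_univ_castSucc, mul_comm]
          have : i + m - k = 0 := by omega
          simp [this]
      rw [← hA]
      cases i with
      | zero =>
        rw [cc]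
        convert add_zero _
        apply Finset.sum_eq_zero
        intro g hg
        exfalso
        simp only [Finset.mem_filter, Finset.mem_univ, true_and] at hg
        apply hg.2
        have hm : StrictMono g := fun a b hab => hg.1 a b hab
        obtain rfl : m = k := by omega
        have hs : Function.Surjective g := Finite.surjective_of_injective hm.injective
        obtain ⟨a, ha⟩ := hs (Fin.last m)
        have := hm.monotone (Fin.le_last a)
        rw [ha] at this
        exact le_antisymm (Fin.le_last _) this
      | succ i =>
        rw [cc, add_comm]
        congr 1
        symm
        rw [← ih (m + 1) i (by omega), aux_sum_pow]
        refine Finset.sum_bij (fun g _ l => (g l).castSucc) ?_ ?_ ?_ ?_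
        · intro g hg
          simp only [Finset.mem_filter, Finset.mem_univ, true_and] at hg ⊢
          refine ⟨fun a b hab => by simpa using hg a b hab, ?_⟩
          exact (Fin.castSucc_lt_last _).ne
        · intro g _ g' _ hgg
          funext l
          have := congrFun hgg l
          simpa using this
        · intro g hg
          simp only [Finset.mem_filter, Finset.mem_univ, true_and] at hg
          obtain ⟨hg, hl⟩ := hg
          have hm : StrictMono g := fun a b hab => hg a b hab
          have hlt : ∀ l, (g l).val < k := by
            intro l
            have h1 := hm.monotone (Fin.le_last l)
            have h2 := lt_of_le_of_lt h1 (lt_of_le_of_ne (Fin.le_last _) hl)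
            simpa [Fin.lt_def] using h2
          refine ⟨fun l => ⟨(g l).val, hlt l⟩, ?_, ?_⟩
          · simp only [Finset.mem_filter, Finset.mem_univ, true_and]
            intro a b hab
            exact hg a b hab
          · funext l
            simp
        · intro g hg
          simp only [Finset.mem_filter, Finset.mem_univ, true_and] at hg
          rw [← Finset.prod_pow]
          refine Finset.prod_congr rfl fun l _ => ?_
          have hb := bound_aux g hg i (by omega) l
          rw [← pow_mul, mul_assoc, ← pow_succ]
          simp only [Fin.val_castSucc]
          congr 3
          omega

theorem det_aux (x : ℕ → R) (k i : ℕ) (hi : i ≤ k) :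
    (Matrix.of fun r s : Fin k =>
        x s.val ^ (Fintype.card K) ^ (if r.val < i then r.val else r.val + 1)).det
    = (∏ j ∈ Finset.range k, LL (Fintype.card K) x j (x j)) *
      cc (Fintype.card K) (fun j => LL (Fintype.card K) x j (x j)) k i := by
  classical
  set q := Fintype.card K with hqdef
  set c := cc q (fun j => LL q x j (x j)) with hc
  set S : Matrix (Fin (k + 1)) (Fin (k + 1)) R :=
    Matrix.of fun e t => (-1) ^ (e.val + t.val) * c e.val t.val with hS
  set B : Matrix (Fin (k + 1)) (Fin (k + 1)) R :=
    Matrix.of fun e j => if j.val < k then x j.val ^ q ^ e.val else if e.val = i then 1 else 0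
    with hB
  have hSdet : S.det = 1 := by
    rw [Matrix.det_of_isLowerTriangular]
    · apply Finset.prod_eq_one
      intro e _
      have h1 : c e.val e.val = 1 := cc_self _ _
      simp [hS, h1, ← two_mul]
    · intro a b hab
      have h1 : c a.val b.val = 0 := cc_zero _ _ _ (by simpa using hab)
      simp [hS, h1]
  have hSB1 : ∀ e j : Fin (k + 1), j.val < k → (S * B) e j = LL q x e.val (x j.val) := by
    intro e j hj
    rw [Matrix.mul_apply, hqdef, LL_sum x e.val (k + 1) e.isLt, Finset.sum_range]
    refine Finset.sum_congr rfl fun t _ => ?_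
    simp [hS, hB, hj, hc, hqdef]
  have hSB2 : ∀ e, (S * B) e (Fin.last k) = (-1) ^ (e.val + i) * c e.val i := by
    intro e
    rw [Matrix.mul_apply, Finset.sum_eq_single ⟨i, by omega⟩]
    · simp [hS, hB]
    · intro t _ ht
      have : t.val ≠ i := fun h => ht (Fin.ext h)
      simp [hB, this]
    · simp
  have hSBdet : (S * B).det
      = (∏ j ∈ Finset.range k, LL q x j (x j)) * ((-1) ^ (k + i) * c k i) := by
    rw [Matrix.det_of_isUpperTriangular]
    · rw [Fin.prod_univ_castSucc, hSB2, Finset.prod_range]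
      congr 1
      refine Finset.prod_congr rfl fun j _ => ?_
      rw [hSB1 _ _ (by simp)]
      simp
    · intro a b hab
      have hab' : b.val < a.val := by simpa using hab
      rw [hSB1 _ _ (by omega)]
      exact LL_vanish x _ _ hab'
  have hBdet : B.det = (-1) ^ (i + k) * (Matrix.of fun r s : Fin k =>
        x s.val ^ q ^ (if r.val < i then r.val else r.val + 1)).det := by
    rw [Matrix.det_succ_column B (Fin.last k), Finset.sum_eq_single ⟨i, by omega⟩]
    · congr 1
      · simp [hB]
      · congr 1
        ext r s
        simp only [hB, Matrix.submatrix_apply, Matrix.of_apply, Fin.succAbove_last,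
          Fin.val_castSucc, s.isLt, if_true]
        congr 2
        simp only [Fin.succAbove, Fin.lt_def, Fin.val_castSucc]
        split_ifs <;> simp
    · intro t _ ht
      have : t.val ≠ i := fun h => ht (Fin.ext h)
      simp [hB, this]
    · simp
  rw [Matrix.det_mul, hSdet, one_mul, hBdet] at hSBdet
  have h2 := congrArg (fun z => (-1 : R) ^ (i + k) * z) hSBdet
  have hsq : (-1 : R) ^ (i + k) * (-1) ^ (i + k) = 1 := by
    rw [← mul_pow]
    simp
  simp only [← mul_assoc, hsq, one_mul] at h2
  rw [h2, add_comm k i]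
  linear_combination (∏ j ∈ Finset.range k, LL q x j (x j)) * c k i * hsq

end Aux

/-- the variables, extended by zero. -/
noncomputable def xx (j : ℕ) : MvPolynomial (Fin n) F := if h : j < n then X ⟨j, h⟩ else 0

theorem fP_eq (e : ℕ) (he : e < n) :
    fP F n (e + 1) = LL (Fintype.card F) (xx F n) e (xx F n e) := by
  have h : 1 ≤ e + 1 ∧ e + 1 ≤ n := by omega
  rw [fP, dif_pos h, LL_prod (K := F)]
  refine Finset.prod_congr rfl fun α _ => ?_
  have h1 : xx F n e = X ⟨e, he⟩ := by simp [xx, he]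
  rw [h1]
  congr 1
  refine Finset.sum_congr rfl fun j _ => ?_
  have hj : j.val < n := lt_trans j.isLt he
  simp [xx, hj, MvPolynomial.algebraMap_eq]

/-- Lemma 2.3: the determinant `d_{k,i}` in terms of the invariants `f_j` and `f̃_j = f_j^{q-1}`. -/
theorem det_d_eq (k i : ℕ) (hk1 : 1 ≤ k) (hk2 : k ≤ n) (hi : i ≤ k) :
    (Matrix.of fun r s : Fin k =>
        X (⟨s.val, lt_of_lt_of_le s.isLt hk2⟩ : Fin n) ^
          (Fintype.card F) ^ (if r.val < i then r.val else r.val + 1)).det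
    = (∏ j ∈ Finset.Icc 1 k, fP F n j) *
      ∑ g ∈ Finset.univ.filter (fun g : Fin (k - i) → Fin k => ∀ a b : Fin (k - i), a < b → g a < g b),
        ∏ l : Fin (k - i),
          fP F n ((g l).val + 1) ^
            ((Fintype.card F - 1) * (Fintype.card F) ^ (i + l.val - (g l).val)) := by
  have hL : (Matrix.of fun r s : Fin k =>
        (X (⟨s.val, lt_of_lt_of_le s.isLt hk2⟩ : Fin n) : MvPolynomial (Fin n) F) ^
          (Fintype.card F) ^ (if r.val < i then r.val else r.val + 1))
      = (Matrix.of fun r s : Fin k =>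
        xx F n s.val ^ (Fintype.card F) ^ (if r.val < i then r.val else r.val + 1)) := by
    ext1 r s
    have hs : s.val < n := lt_of_lt_of_le s.isLt hk2
    simp [xx, hs]
  rw [hL, det_aux (K := F) _ _ _ hi, ← sum_eq_cc (K := F) _ k (k - i) i (by omega)]
  congr 1
  · rw [← Finset.Ico_add_one_right_eq_Icc, Finset.prod_Ico_eq_prod_range]
    refine Finset.prod_congr (by simp) fun j hj => ?_
    have hj' := Finset.mem_range.1 hj
    rw [add_comm 1 j, fP_eq F n j (by omega)]
  · refine Finset.sum_congr rfl fun g _ => Finset.prod_congr rfl fun l _ => ?_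
    rw [fP_eq F n _ (lt_of_lt_of_le (g l).isLt hk2)]
end

section
/- For every k with 1 ≤ k ≤ n, the following identity (relation R̃_k) holds in F_q[x_1,…,x_n,y_1,…,y_n]: ( Σ_{i=0}^{k−1} Σ_{j=0}^{n−k} (−1)^{i+j} c_{k−1,i} · c*_{n−k,j} · u_{i−j}^{q^{min(i,j)}} )^{q−1} = f̃_k · f̃*_{n+1−k}. -/
open MvPolynomial

variable (F : Type) [Field F] [Fintype F] (n : ℕ)

/-- `fX F n k` is the orbit product `f_k` (1-indexed, meaningful for `1 ≤ k ≤ n`). -/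
noncomputable def fX (k : ℕ) : MvPolynomial (Fin n ⊕ Fin n) F :=
  if h : 1 ≤ k ∧ k ≤ n then
    ∏ α : Fin (k - 1) → F,
      (X (Sum.inl ⟨k - 1, by omega⟩) +
        ∑ j : Fin (k - 1), C (α j) * X (Sum.inl ⟨j.val, by omega⟩))
  else 0

/-- `fY F n k` is `f_k^*` (1-indexed), the orbit product of `y_{n+1-k}`. -/
noncomputable def fY (k : ℕ) : MvPolynomial (Fin n ⊕ Fin n) F :=
  if h : 1 ≤ k ∧ k ≤ n then
    ∏ α : Fin (k - 1) → F,
      (X (Sum.inr ⟨n - k, by omega⟩) +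
        ∑ j : Fin (k - 1), C (α j) * X (Sum.inr ⟨n - 1 - j.val, by omega⟩))
  else 0

/-- `uInv F n j` is the invariant `u_j`, for `j : ℤ`. -/
noncomputable def uInv (j : ℤ) : MvPolynomial (Fin n ⊕ Fin n) F :=
  if 0 ≤ j then ∑ k : Fin n, X (Sum.inl k) ^ (Fintype.card F) ^ j.toNat * X (Sum.inr k)
  else ∑ k : Fin n, X (Sum.inl k) * X (Sum.inr k) ^ (Fintype.card F) ^ (-j).toNat

/-- `cX F n s t` is the Dickson-type invariant `c_{s,t}` (in the `x`-variables):
the sum over strictly increasing sequences `1 ≤ j_1 < ⋯ < j_{s-t} ≤ s` (encoded as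
strictly monotone functions `Fin (s-t) → Fin s`) of `∏_l f_{j_l}^{(q-1)·q^{t+l-j_l}}`. -/
noncomputable def cX (s t : ℕ) : MvPolynomial (Fin n ⊕ Fin n) F :=
  if s ≤ n then
    ∑ g ∈ Finset.univ.filter (fun g : Fin (s - t) → Fin s => ∀ a b : Fin (s - t), a < b → g a < g b),
      ∏ l : Fin (s - t),
        fX F n ((g l).val + 1) ^ ((Fintype.card F - 1) * (Fintype.card F) ^ (t + l.val - (g l).val))
  else 0

/-- `cY F n s t` is `c_{s,t}^*` (in the `y`-variables). -/
noncomputable def cY (s t : ℕ) : MvPolynomial (Fin n ⊕ Fin n) F :=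
  if s ≤ n then
    ∑ g ∈ Finset.univ.filter (fun g : Fin (s - t) → Fin s => ∀ a b : Fin (s - t), a < b → g a < g b),
      ∏ l : Fin (s - t),
        fY F n ((g l).val + 1) ^ ((Fintype.card F - 1) * (Fintype.card F) ^ (t + l.val - (g l).val))
  else 0


section Helpers

variable {R : Type} [CommRing R] [Algebra F R]

/-- The additive polynomial attached to `z 0, …, z (s-1)`, defined recursively. -/
noncomputable def addPoly (z : ℕ → R) : ℕ → R → R
  | 0, x => x
  | s + 1, x => addPoly z s x ^ Fintype.card F
      - addPoly z s (z s) ^ (Fintype.card F - 1) * addPoly z s x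

theorem frob_add (a b : R) :
    (a + b) ^ Fintype.card F = a ^ Fintype.card F + b ^ Fintype.card F :=
  map_add (FiniteField.frobeniusAlgHom F R) a b

theorem frob_smul (a : F) (b : R) :
    (algebraMap F R a * b) ^ Fintype.card F = algebraMap F R a * b ^ Fintype.card F := by
  rw [mul_pow, ← map_pow, FiniteField.pow_card]

theorem frob_sum {ι : Type} (s : Finset ι) (f : ι → R) :
    (∑ i ∈ s, f i) ^ Fintype.card F = ∑ i ∈ s, f i ^ Fintype.card F :=
  map_sum (FiniteField.frobeniusAlgHom F R) f s

theorem frob_sum_iter {ι : Type} (s : Finset ι) (f : ι → R) (m : ℕ) :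
    (∑ i ∈ s, f i) ^ Fintype.card F ^ m = ∑ i ∈ s, f i ^ Fintype.card F ^ m := by
  induction m with
  | zero => simp
  | succ m ih =>
    rw [pow_succ, pow_mul, ih, frob_sum]
    simp only [pow_mul]

theorem frob_neg_one : (-1 : R) ^ Fintype.card F = -1 := by
  have := map_neg (FiniteField.frobeniusAlgHom F R) 1
  simpa using this

theorem addPoly_add (z : ℕ → R) (s : ℕ) (x y : R) :
    addPoly F z s (x + y) = addPoly F z s x + addPoly F z s y := by
  induction s with
  | zero => rfl
  | succ s ih => simp only [addPoly, ih, frob_add]; ring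

theorem addPoly_smul (z : ℕ → R) (s : ℕ) (a : F) (y : R) :
    addPoly F z s (algebraMap F R a * y) = algebraMap F R a * addPoly F z s y := by
  induction s with
  | zero => rfl
  | succ s ih => simp only [addPoly, ih, frob_smul]; ring

theorem addPoly_self (z : ℕ → R) (s : ℕ) : addPoly F z (s + 1) (z s) = 0 := by
  have h : Fintype.card F = Fintype.card F - 1 + 1 := by
    have := Fintype.card_pos (α := F); omega
  simp only [addPoly]
  nth_rewrite 1 [h]
  rw [pow_succ]; ring

theorem addPoly_eq_zero (z : ℕ → R) (s j : ℕ) (hj : j < s) : addPoly F z s (z j) = 0 := by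
  induction s with
  | zero => omega
  | succ s ih =>
    rcases Nat.lt_succ_iff_lt_or_eq.1 hj with h | h
    · simp only [addPoly, ih h]
      have := Fintype.card_ne_zero (α := F)
      simp [this]
    · subst h; exact addPoly_self F z j

theorem prod_field_add (x : R) : ∏ a : F, (x + algebraMap F R a) = x ^ Fintype.card F - x := by
  classical
  have hq : 1 < Fintype.card F := Fintype.one_lt_card
  have h := Polynomial.prod_multiset_X_sub_C_of_monic_of_roots_card_eq
    (p := (Polynomial.X ^ Fintype.card F - Polynomial.X : Polynomial F))
    (Polynomial.monic_X_pow_sub (by simpa using hq))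
    (by rw [FiniteField.roots_X_pow_card_sub_X, FiniteField.X_pow_card_sub_X_natDegree_eq F hq]
        rfl)
  rw [FiniteField.roots_X_pow_card_sub_X] at h
  have h2 : ∏ a : F, (Polynomial.X - Polynomial.C a) =
    (Polynomial.X ^ Fintype.card F - Polynomial.X : Polynomial F) := h
  have h3 := congrArg (Polynomial.aeval x) h2
  simp only [map_prod, map_sub, map_pow, Polynomial.aeval_X, Polynomial.aeval_C] at h3
  rw [← h3, ← Equiv.prod_comp (Equiv.neg F)]
  simp [sub_eq_add_neg]

theorem prod_field_add_mul_aux {K : Type} [Field K] [Algebra F K] (x y : K) :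
    ∏ a : F, (x + algebraMap F K a * y) =
      x ^ Fintype.card F - y ^ (Fintype.card F - 1) * x := by
  have hq : 1 < Fintype.card F := Fintype.one_lt_card
  by_cases hy : y = 0
  · subst hy
    have : Fintype.card F - 1 ≠ 0 := by omega
    simp [this]
  · have h := prod_field_add F (R := K) (x / y)
    have e : ∀ a : F, x + algebraMap F K a * y = y * (x / y + algebraMap F K a) := by
      intro a
      field_simp
    rw [Finset.prod_congr rfl (fun a _ => e a), Finset.prod_mul_distrib, h]
    simp only [Finset.prod_const, Finset.card_univ]
    obtain ⟨m, hm⟩ : ∃ m, Fintype.card F = m + 1 := ⟨Fintype.card F - 1, by omega⟩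
    rw [hm]
    simp only [Nat.add_sub_cancel]
    rw [div_pow]
    field_simp
    ring

theorem prod_field_add_mul [IsDomain R] (x y : R) :
    ∏ a : F, (x + algebraMap F R a * y) =
      x ^ Fintype.card F - y ^ (Fintype.card F - 1) * x := by
  apply IsFractionRing.injective R (FractionRing R)
  have h := prod_field_add_mul_aux F (algebraMap R (FractionRing R) x)
    (algebraMap R (FractionRing R) y)
  simp only [IsScalarTower.algebraMap_apply F R (FractionRing R)] at h
  simpa only [map_prod, map_add, map_sub, map_mul, map_pow] using h

theorem prod_eq_addPoly [IsDomain R] (z : ℕ → R) (s : ℕ) (x : R) :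
    ∏ α : Fin s → F, (x + ∑ j : Fin s, algebraMap F R (α j) * z j) = addPoly F z s x := by
  induction s generalizing x with
  | zero => simp [addPoly]
  | succ s ih =>
    rw [← Equiv.prod_comp (Fin.snocEquiv (fun _ : Fin (s + 1) => F)), Fintype.prod_prod_type]
    have : ∀ a : F, ∏ α : Fin s → F, (x + ∑ j : Fin (s + 1),
        algebraMap F R (Fin.snocEquiv (fun _ : Fin (s + 1) => F) (a, α) j) * z j) =
        addPoly F z s x + algebraMap F R a * addPoly F z s (z s) := by
      intro a
      rw [← addPoly_smul, ← addPoly_add, ← ih]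
      refine Finset.prod_congr rfl fun α _ => ?_
      rw [Fin.sum_univ_castSucc]
      simp [Fin.snocEquiv]
      ring
    rw [Finset.prod_congr rfl (fun a _ => this a), prod_field_add_mul]
    rfl

/-- General sum over strictly increasing sequences. -/
noncomputable def dSum (f : ℕ → R) (m s t : ℕ) : R :=
  ∑ g ∈ Finset.univ.filter (fun g : Fin m → Fin s => ∀ a b : Fin m, a < b → g a < g b),
      ∏ l : Fin m,
        f (g l).val ^ ((Fintype.card F - 1) * (Fintype.card F) ^ (t + l.val - (g l).val))

theorem dSum_zero (f : ℕ → R) (s t : ℕ) : dSum F f 0 s t = 1 := by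
  unfold dSum
  rw [Finset.filter_true_of_mem]
  · simp
  · intro g _ a; exact a.elim0

theorem dSum_gt (f : ℕ → R) (m s t : ℕ) (h : s < m) : dSum F f m s t = 0 := by
  unfold dSum
  rw [Finset.filter_false_of_mem]
  · simp
  · intro g _ hg
    have : StrictMono g := fun a b hab => hg a b hab
    have := Fintype.card_le_of_injective g this.injective
    simp at this; omega

theorem strictMono_bound {m s : ℕ} (g : Fin m → Fin s) (hg : ∀ a b : Fin m, a < b → g a < g b)
    (l : Fin m) : (g l).val + m ≤ s + l.val := by
  have hm : StrictMono g := fun a b hab => hg a b hab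
  have h := Finset.card_le_card_of_injOn (s := Finset.Ioi l) (t := Finset.Ioi (g l)) g
    (fun a ha => by simpa using hg _ _ (by simpa using ha)) hm.injective.injOn
  simp only [Fin.card_Ioi] at h
  have := l.2; have := (g l).2
  omega

theorem dSum_frob (f : ℕ → R) (m s t : ℕ) (h : m + t = s) :
    dSum F f m s (t + 1) = dSum F f m s t ^ Fintype.card F := by
  unfold dSum
  rw [frob_sum]
  refine Finset.sum_congr rfl fun g hg => ?_
  rw [← Finset.prod_pow]
  refine Finset.prod_congr rfl fun l _ => ?_
  have hb := strictMono_bound g (by simpa using hg) l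
  rw [← pow_mul, mul_assoc, ← pow_succ]
  congr 3
  omega

theorem dSum_succ (f : ℕ → R) (m s t : ℕ) :
    dSum F f (m + 1) (s + 1) t =
      dSum F f (m + 1) s t
        + f s ^ ((Fintype.card F - 1) * (Fintype.card F) ^ (t + m - s)) * dSum F f m s t := by
  classical
  conv_lhs => unfold dSum
  rw [← Finset.sum_filter_not_add_sum_filter _ (fun g => g (Fin.last m) = Fin.last s)]
  congr 1
  · unfold dSum
    symm
    refine Finset.sum_bij (fun g _ l => (g l).castSucc) ?_ ?_ ?_ ?_
    · intro g hg
      simp only [Finset.mem_filter, Finset.mem_univ, true_and] at hg ⊢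
      exact ⟨fun a b hab => by simpa using hg a b hab, Fin.castSucc_ne_last _⟩
    · intro g _ g' _ h
      funext l
      exact Fin.castSucc_injective _ (congrFun h l)
    · intro g hg
      simp only [Finset.mem_filter, Finset.mem_univ, true_and] at hg
      have hne : ∀ l, g l ≠ Fin.last s := by
        intro l hl
        rcases Fin.eq_castSucc_or_eq_last l with ⟨l', rfl⟩ | rfl
        · have := hg.1 _ _ (Fin.castSucc_lt_last l')
          rw [hl] at this
          exact absurd this (not_lt.2 (Fin.le_last _))
        · exact hg.2 hl
      refine ⟨fun l => (g l).castPred (hne l), ?_, ?_⟩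
      · simp only [Finset.mem_filter, Finset.mem_univ, true_and]
        intro a b hab
        simpa using hg.1 a b hab
      · funext l; simp
    · intro g _
      simp
  · unfold dSum
    rw [Finset.mul_sum]
    symm
    refine Finset.sum_bij (fun g _ => Fin.snoc (α := fun _ => Fin (s + 1))
      (fun l => (g l).castSucc) (Fin.last s)) ?_ ?_ ?_ ?_
    · intro g hg
      simp only [Finset.mem_filter, Finset.mem_univ, true_and] at hg ⊢
      refine ⟨fun a b hab => ?_, by simp⟩
      rcases Fin.eq_castSucc_or_eq_last b with ⟨b, rfl⟩ | rfl
      · rcases Fin.eq_castSucc_or_eq_last a with ⟨a, rfl⟩ | rfl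
        · simpa using hg a b (by simpa using hab)
        · exact absurd hab (not_lt.2 (Fin.le_last _))
      · rcases Fin.eq_castSucc_or_eq_last a with ⟨a, rfl⟩ | rfl
        · simp [Fin.castSucc_lt_last]
        · exact absurd hab (lt_irrefl _)
    · intro g _ g' _ h
      funext l
      have := congrFun h l.castSucc
      simpa using this
    · intro g hg
      simp only [Finset.mem_filter, Finset.mem_univ, true_and] at hg
      have hne : ∀ l : Fin m, g l.castSucc ≠ Fin.last s := by
        intro l hl
        have := hg.1 _ _ (Fin.castSucc_lt_last l)
        rw [hl] at this
        exact absurd this (not_lt.2 (Fin.le_last _))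
      refine ⟨fun l => (g l.castSucc).castPred (hne l), ?_, ?_⟩
      · simp only [Finset.mem_filter, Finset.mem_univ, true_and]
        intro a b hab
        simpa using hg.1 a.castSucc b.castSucc (by simpa using hab)
      · funext l
        rcases Fin.eq_castSucc_or_eq_last l with ⟨l, rfl⟩ | rfl
        · simp
        · simp [hg.2]
    · intro g _
      rw [Fin.prod_univ_castSucc]
      simp [mul_comm]

/-- Expansion of the additive polynomial. -/
theorem addPoly_expand (z : ℕ → R) (s : ℕ) (x : R) :
    addPoly F z s x = ∑ t ∈ Finset.range (s + 1), (-1) ^ (s + t) *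
      dSum F (fun j => addPoly F z j (z j)) (s - t) s t * x ^ Fintype.card F ^ t := by
  induction s with
  | zero => simp [addPoly, dSum_zero]
  | succ s ih =>
    set f := fun j => addPoly F z j (z j) with hf
    have hrec : addPoly F z (s + 1) x = addPoly F z s x ^ Fintype.card F
      - f s ^ (Fintype.card F - 1) * addPoly F z s x := rfl
    rw [hrec, ih, frob_sum]
    have e1 : ∀ t ∈ Finset.range (s + 1), ((-1) ^ (s + t) *
        dSum F f (s - t) s t * x ^ Fintype.card F ^ t) ^ Fintype.card F =
        (-1) ^ (s + t) * dSum F f (s - t) s (t + 1) * x ^ Fintype.card F ^ (t + 1) := by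
      intro t ht
      rw [dSum_frob F f (s - t) s t (by simp at ht; omega), mul_pow, mul_pow, ← pow_mul,
        mul_comm (s + t), pow_mul, frob_neg_one, ← pow_mul, ← pow_succ]
    rw [Finset.sum_congr rfl e1]
    -- the right-hand side
    have e2 : ∀ t ∈ Finset.range (s + 1), (-1) ^ (s + 1 + t) *
        dSum F f (s + 1 - t) (s + 1) t * x ^ Fintype.card F ^ t =
        (-1) ^ (s + 1 + t) * dSum F f (s + 1 - t) s t * x ^ Fintype.card F ^ t -
        f s ^ (Fintype.card F - 1) * ((-1) ^ (s + t) *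
        dSum F f (s - t) s t * x ^ Fintype.card F ^ t) := by
      intro t ht
      have h1 : s + 1 - t = s - t + 1 := by simp at ht; omega
      have h2 : t + (s - t) - s = 0 := by omega
      rw [h1, dSum_succ, h2]
      simp only [pow_zero, mul_one]
      ring
    rw [Finset.sum_range_succ _ (s + 1), Finset.sum_congr rfl e2, Finset.sum_sub_distrib,
      ← Finset.mul_sum]
    rw [sub_add_eq_add_sub]
    congr 1
    conv_lhs => rw [Finset.sum_range_succ _ s]
    conv_rhs => rw [Finset.sum_range_succ' _ s]
    rw [dSum_gt F f (s + 1 - 0) s 0 (by omega)]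
    simp only [Nat.sub_self, dSum_zero]
    have e3 : ∀ t ∈ Finset.range s, (-1) ^ (s + t) * dSum F f (s - t) s (t + 1) *
        x ^ Fintype.card F ^ (t + 1) = (-1) ^ (s + 1 + (t + 1)) *
        dSum F f (s + 1 - (t + 1)) s (t + 1) * x ^ Fintype.card F ^ (t + 1) := by
      intro t _
      rw [Nat.add_sub_add_right]
      ring
    rw [Finset.sum_congr rfl e3]
    ring

theorem addPoly_signed (z : ℕ → R) (s : ℕ) (x : R) :
    ∑ t ∈ Finset.range (s + 1), (-1) ^ t *
      dSum F (fun j => addPoly F z j (z j)) (s - t) s t * x ^ Fintype.card F ^ t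
      = (-1) ^ s * addPoly F z s x := by
  rw [addPoly_expand, Finset.mul_sum]
  refine Finset.sum_congr rfl fun t _ => ?_
  have : (-1 : R) ^ s * (-1) ^ s = 1 := by rw [← mul_pow]; simp
  rw [pow_add]
  linear_combination (-(-1) ^ t * dSum F (fun j => addPoly F z j (z j)) (s - t) s t *
    x ^ Fintype.card F ^ t) * this

end Helpers

/-- The variables `x_1, x_2, …` as a sequence. -/
noncomputable def zX (j : ℕ) : MvPolynomial (Fin n ⊕ Fin n) F :=
  if h : j < n then X (Sum.inl ⟨j, h⟩) else 0

/-- The variables `y_n, y_{n-1}, …` as a sequence. -/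
noncomputable def zY (j : ℕ) : MvPolynomial (Fin n ⊕ Fin n) F :=
  if h : j < n then X (Sum.inr ⟨n - 1 - j, by omega⟩) else 0

theorem fX_eq (k : ℕ) (hk : k < n) : fX F n (k + 1) = addPoly F (zX F n) k (zX F n k) := by
  unfold fX
  rw [dif_pos ⟨by omega, by omega⟩, ← prod_eq_addPoly]
  refine Finset.prod_congr rfl fun α _ => ?_
  congr 1
  · simp [zX, hk]
  · refine Finset.sum_congr rfl fun j _ => ?_
    have : j.val < n := by have := j.2; omega
    simp [zX, this, MvPolynomial.algebraMap_eq]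

theorem fY_eq (k : ℕ) (hk : k < n) : fY F n (k + 1) = addPoly F (zY F n) k (zY F n k) := by
  unfold fY
  rw [dif_pos ⟨by omega, by omega⟩, ← prod_eq_addPoly]
  refine Finset.prod_congr rfl fun α _ => ?_
  congr 1
  · have : n - (k + 1) = n - 1 - k := by omega
    simp [zY, hk, this]
  · refine Finset.sum_congr rfl fun j _ => ?_
    have : j.val < n := by have := j.2; omega
    simp [zY, this, MvPolynomial.algebraMap_eq]

theorem cX_eq (s t : ℕ) (hs : s ≤ n) :
    cX F n s t = dSum F (fun j => addPoly F (zX F n) j (zX F n j)) (s - t) s t := by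
  unfold cX dSum
  rw [if_pos hs]
  refine Finset.sum_congr rfl fun g _ => Finset.prod_congr rfl fun l _ => ?_
  rw [fX_eq F n _ (by have := (g l).2; omega)]

theorem cY_eq (s t : ℕ) (hs : s ≤ n) :
    cY F n s t = dSum F (fun j => addPoly F (zY F n) j (zY F n j)) (s - t) s t := by
  unfold cY dSum
  rw [if_pos hs]
  refine Finset.sum_congr rfl fun g _ => Finset.prod_congr rfl fun l _ => ?_
  rw [fY_eq F n _ (by have := (g l).2; omega)]

theorem uInv_pow (i j : ℕ) : uInv F n ((i : ℤ) - (j : ℤ)) ^ (Fintype.card F ^ min i j) =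
    ∑ m : Fin n, X (Sum.inl m) ^ Fintype.card F ^ i * X (Sum.inr m) ^ Fintype.card F ^ j := by
  unfold uInv
  split_ifs with h
  · have h1 : ((i : ℤ) - j).toNat = i - j := by omega
    have h2 : min i j = j := by omega
    have h3 : i - j + j = i := by omega
    rw [frob_sum_iter, h1, h2]
    refine Finset.sum_congr rfl fun m _ => ?_
    rw [mul_pow, ← pow_mul, ← pow_add, h3]
  · have h1 : (-((i : ℤ) - j)).toNat = j - i := by omega
    have h2 : min i j = i := by omega
    have h3 : j - i + i = j := by omega
    rw [frob_sum_iter, h1, h2]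
    refine Finset.sum_congr rfl fun m _ => ?_
    rw [mul_pow, ← pow_mul, ← pow_add, h3]

theorem neg_one_pow_card_sub_one {R : Type} [CommRing R] [Algebra F R] :
    (-1 : R) ^ (Fintype.card F - 1) = 1 := by
  have h := FiniteField.pow_card_sub_one_eq_one (-1 : F) (by simp)
  have := congrArg (algebraMap F R) h
  simpa using this

theorem main_sum (k : ℕ) (hk1 : 1 ≤ k) (hk2 : k ≤ n) :
    (∑ i ∈ Finset.range k, ∑ j ∈ Finset.range (n - k + 1),
      (-1 : MvPolynomial (Fin n ⊕ Fin n) F) ^ (i + j) *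
        cX F n (k - 1) i * cY F n (n - k) j *
        uInv F n ((i : ℤ) - (j : ℤ)) ^ (Fintype.card F ^ min i j))
    = (-1) ^ (k - 1 + (n - k)) * (fX F n k * fY F n (n + 1 - k)) := by
  obtain ⟨k, rfl⟩ : ∃ k', k = k' + 1 := ⟨k - 1, by omega⟩
  simp only [Nat.add_sub_cancel]
  set b := n - (k + 1) with hb
  have hb2 : n + 1 - (k + 1) = b + 1 := by omega
  rw [hb2, fX_eq F n k (by omega), fY_eq F n b (by omega)]
  have step : (∑ i ∈ Finset.range (k + 1), ∑ j ∈ Finset.range (b + 1),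
      (-1 : MvPolynomial (Fin n ⊕ Fin n) F) ^ (i + j) *
        cX F n k i * cY F n b j *
        uInv F n ((i : ℤ) - (j : ℤ)) ^ (Fintype.card F ^ min i j)) =
      ∑ m : Fin n, ((-1) ^ k * addPoly F (zX F n) k (X (Sum.inl m))) *
        ((-1) ^ b * addPoly F (zY F n) b (X (Sum.inr m))) := by
    simp only [← addPoly_signed, Finset.sum_mul_sum]
    rw [Finset.sum_comm]
    simp only [uInv_pow, Finset.mul_sum]
    rw [Finset.sum_comm]
    conv_rhs => rw [Finset.sum_comm]
    refine Finset.sum_congr rfl fun i _ => ?_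
    conv_rhs => rw [Finset.sum_comm]
    refine Finset.sum_congr rfl fun j _ => Finset.sum_congr rfl fun m _ => ?_
    rw [cX_eq F n k i (by omega), cY_eq F n b j (by omega)]
    ring
  rw [step]
  have hx : ∀ m : Fin n, (X (Sum.inl m) : MvPolynomial (Fin n ⊕ Fin n) F) = zX F n m := by
    intro m; simp [zX]
  have hy : ∀ m : Fin n, (X (Sum.inr m) : MvPolynomial (Fin n ⊕ Fin n) F)
      = zY F n (n - 1 - m) := by
    intro m
    have h1 : n - 1 - m.val < n := by have := m.2; omega
    have h2 : n - 1 - (n - 1 - m.val) = m.val := by have := m.2; omega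
    simp [zY, h1, h2]
  rw [Finset.sum_eq_single (⟨k, by omega⟩ : Fin n)]
  · rw [hx, hy]
    have : n - 1 - k = b := by omega
    simp only [this]
    ring
  · intro m _ hm
    have hm' : m.val ≠ k := fun h => hm (Fin.ext h)
    rcases lt_or_gt_of_ne hm' with h | h
    · rw [hx, addPoly_eq_zero F _ k m h]; simp
    · rw [hy, addPoly_eq_zero F _ b (n - 1 - m) (by have := m.2; omega)]; simp
  · intro h; exact absurd (Finset.mem_univ _) h

/-- Relation `R̃_k`. -/
theorem relation_Rk_tilde (k : ℕ) (hk1 : 1 ≤ k) (hk2 : k ≤ n) :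
    (∑ i ∈ Finset.range k, ∑ j ∈ Finset.range (n - k + 1),
      (-1 : MvPolynomial (Fin n ⊕ Fin n) F) ^ (i + j) *
        cX F n (k - 1) i * cY F n (n - k) j *
        uInv F n ((i : ℤ) - (j : ℤ)) ^ (Fintype.card F ^ min i j)) ^ (Fintype.card F - 1)
    = fX F n k ^ (Fintype.card F - 1) * fY F n (n + 1 - k) ^ (Fintype.card F - 1) := by
  rw [main_sum F n k hk1 hk2, mul_pow, mul_pow, ← pow_mul, mul_comm _ (Fintype.card F - 1), pow_mul,
    neg_one_pow_card_sub_one F, one_pow, one_mul]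
end
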